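/- The sequence r(n) = (p(n)/n)^{1/n} is strictly log-convex for n ≥ 61; that is, for every integer n ≥ 61, r(n)² < r(n-1)·r(n+1). -/

import Mathlib

open Real

/-- The partition function, as a real number. -/
noncomputable def p (n : ℕ) : ℝ := (Fintype.card (Nat.Partition n) : ℝ)

/-- `r n = (p n / n)^(1/n)`. -/
noncomputable def r (n : ℕ) : ℝ := (p n / (n : ℝ)) ^ ((1 : ℝ) / (n : ℝ))

/-!
Write `F(z) = ∏ (1 - z ^ i)⁻¹` for the generating function of `p`. Cauchy's formula on the circle of
radius `e ^ (-s)` reads `p(k) = e ^ (k s) F(e ^ (-s)) I(s, k) / (2π)`, where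
`I(s, k) = ∫ W(t) cos (arg F(e ^ (-s + i t)) - k t) dt` over `[-π, π]` with
`W(t) = |F(e ^ (-s + i t))| / F(e ^ (-s))`. With the single radius `s = √(ζ(2) / n)` used for
`k = n - 1, n, n + 1`, the first two factors contribute a linear function of `k` to `log p(k)`, so
its first and second differences at `n` are governed by those of `I`. Since the three phases differ
by `± t`, addition theorems for `cos` bound these by `∫ W(t) |sin t| dt` and
`∫ W(t) 2 (1 - cos t) dt`, which are small compared with `I(s, n)` because `W` is concentrated on
the scale `s ^ (3 / 2)`.

Multiplied by `n (n - 1) (n + 1)`, the claim compares `2 log (p(n) / n)`, about `4 ζ(2) / s`, with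
a combination of these differences whose total stays below that for `s ≤ 1 / 78`, that is, for
`n ≥ 10048`. For smaller `n` the partition numbers are the base `2 ^ 384` digits of the inverse of
Euler's pentagonal series at `2 ^ 384`, taken modulo a power of `2 ^ 384`, and elementary bounds for
the logarithm turn the claim into an inequality between integers.
-/

section Pentagonal

open PowerSeries PowerSeries.WithPiTopology

theorem partitionSeries_mul_pentagonalSeries :
    (PowerSeries.mk fun n => (Fintype.card (Nat.Partition n) : ℤ)) * pentagonalSeries ℤ = 1 := by
  have hpart := Nat.Partition.hasProd_powerSeriesMk_card_restricted ℤ (fun _ => True)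
  simp only [if_true, Nat.Partition.restricted, implies_true, Finset.filter_true,
    Finset.card_univ, pow_mul] at hpart
  refine (hpart.mul (hasProd_one_sub_X_pow ℤ)).unique ?_
  convert! hasProd_one (β := ℕ) with i
  exact tsum_pow_mul_one_sub_of_constantCoeff_eq_zero (by simp)

theorem two_mul_pentagonal_neg (k : ℕ) : 2 * pentagonal (-k) = k * (3 * k + 1) := by
  exact_mod_cast two_mul_natCast_pentagonal_neg k

theorem two_mul_pentagonal_succ (k : ℕ) :
    2 * pentagonal (k + 1) = (k + 1) * (3 * k + 2) := by
  zify
  rw [two_mul_natCast_pentagonal]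
  ring

theorem coeff_pentagonalSeries_eq_sum {d m : ℕ} (hd : 2 * d < m * (3 * m + 1)) :
    coeff d (pentagonalSeries ℤ) = ∑ k ∈ Finset.range m, coeff d ((-1 : ℤ⟦X⟧) ^ k *
      (X ^ pentagonal (-k) - X ^ pentagonal (k + 1))) := by
  have hsum := (hasSum_pow_pentagonal_sub_pentagonalSeries ℤ).map
    (coeff (R := ℤ) d) (continuous_coeff ℤ d)
  refine hsum.unique (hasSum_sum_of_ne_finset_zero fun k hk => ?_)
  have hmk : m ≤ k := by simpa using hk
  have hneg : 2 * d < 2 * pentagonal (-k) := by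
    rw [two_mul_pentagonal_neg]
    exact hd.trans_le (by gcongr)
  have hsucc : 2 * d < 2 * pentagonal (k + 1) := by
    rw [two_mul_pentagonal_succ]
    exact hd.trans_le (by gcongr <;> omega)
  have hsign (f : ℤ⟦X⟧) (hf : coeff d f = 0) : coeff d ((-1) ^ k * f) = 0 := by
    rcases neg_one_pow_eq_or ℤ⟦X⟧ k with h | h <;> simp [h, hf]
  refine hsign _ ?_
  rw [map_sub, coeff_X_pow, coeff_X_pow, if_neg (by omega), if_neg (by omega), sub_zero]

theorem sum_card_partition_mul_sum_pentagonal {R : Type*} [CommRing R] {x : R} {N m : ℕ}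
    (hx : x ^ N = 0) (hm : 2 * N ≤ m * (3 * m + 1)) :
    (∑ i ∈ Finset.range N, (Fintype.card (Nat.Partition i) : R) * x ^ i) *
      ∑ k ∈ Finset.range m, (-1) ^ k * (x ^ pentagonal (-k) - x ^ pentagonal (k + 1)) = 1 := by
  let Q : Polynomial ℤ := trunc N (PowerSeries.mk fun n => (Fintype.card (Nat.Partition n) : ℤ))
  let E : Polynomial ℤ := ∑ k ∈ Finset.range m, (-1) ^ k *
    (Polynomial.X ^ pentagonal (-k) - Polynomial.X ^ pentagonal (k + 1))
  have hcoeff (d : ℕ) (hd : d < N) : E.coeff d = coeff d (pentagonalSeries ℤ) := by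
    rw [coeff_pentagonalSeries_eq_sum (m := m) (by omega), ← Polynomial.coeff_coe,
      ← Polynomial.coeToPowerSeries.ringHom_apply, map_sum, map_sum]
    simp
  have hdvd : (Polynomial.X : Polynomial ℤ) ^ N ∣ Q * E - 1 := by
    rw [Polynomial.X_pow_dvd_iff]
    intro d hd
    rw [Polynomial.coeff_sub, Polynomial.coeff_mul, Polynomial.coeff_one, sub_eq_zero,
      ← coeff_one, ← partitionSeries_mul_pentagonalSeries, PowerSeries.coeff_mul]
    refine Finset.sum_congr rfl fun ij hij => ?_
    have := Finset.HasAntidiagonal.mem_antidiagonal.1 hij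
    rw [hcoeff _ (by omega), coeff_trunc, if_pos (by omega)]
  have heval := map_dvd (Polynomial.aeval x) hdvd
  rw [map_pow, Polynomial.aeval_X, hx, zero_dvd_iff, map_sub, map_mul, map_one,
    sub_eq_zero] at heval
  convert heval using 2
  · simp [Q, Polynomial.aeval_def, eval₂_trunc_eq_sum_range]
  · simp [E]

end Pentagonal

section Criterion

/-- The quantity `p n / n` whose `n`-th root is `r n`. -/
noncomputable def q (n : ℕ) : ℝ := p n / n

theorem p_pos (n : ℕ) : 0 < p n :=
  Nat.cast_pos.2 Fintype.card_pos

theorem q_pos {n : ℕ} (hn : n ≠ 0) : 0 < q n := by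
  have := p_pos n
  unfold q
  positivity

theorem r_eq_exp {n : ℕ} (hn : n ≠ 0) : r n = exp (log (q n) / n) := by
  rw [r, ← q, rpow_def_of_pos (q_pos hn), mul_one_div]

theorem sq_r_lt_of_log_q_lt {k : ℕ} (hk : k ≠ 0)
    (h : 2 * (k + 1) * (log (q (k + 1)) - log (q k)) +
      k * (k + 1) * (2 * log (q (k + 1)) - log (q k) - log (q (k + 2))) < 2 * log (q (k + 1))) :
    r (k + 1) ^ 2 < r k * r (k + 2) := by
  have hk' : (0 : ℝ) < k := by positivity
  rw [r_eq_exp hk, r_eq_exp k.succ_ne_zero, r_eq_exp (k + 1).succ_ne_zero, ← exp_nat_mul,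
    ← exp_add, exp_lt_exp]
  push_cast
  rw [div_add_div _ _ (by positivity) (by positivity), mul_div_assoc',
    div_lt_div_iff₀ (by positivity) (by positivity)]
  linarith [mul_lt_mul_of_pos_left h hk']

end Criterion

section ExactComparison

theorem log_le_half_sub_inv {x : ℝ} (hx : 1 ≤ x) : log x ≤ (x - x⁻¹) / 2 := by
  simpa [Real.sinh_log (zero_lt_one.trans_le hx)] using
    Real.self_le_sinh_iff.2 (log_nonneg hx)

/-- The integer part of the binary logarithm of `x`, provided `x < 2 ^ 2 ^ d`. Unlike `Nat.log2`,
which the kernel unfolds one binary digit at a time, it proceeds by bisection. -/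
def bisectLog (d : ℕ) : ℕ → ℕ :=
  Nat.rec (fun _ => 0)
    (fun d ih x => bif Nat.beq (x / 2 ^ 2 ^ d) 0 then ih x else 2 ^ d + ih (x / 2 ^ 2 ^ d)) d

theorem two_pow_bisectLog_le (d : ℕ) {x : ℕ} (hx : x ≠ 0) : 2 ^ bisectLog d x ≤ x := by
  induction d generalizing x with
  | zero => exact Nat.one_le_iff_ne_zero.2 hx
  | succ d ih =>
    have hrec : bisectLog (d + 1) x = bif Nat.beq (x / 2 ^ 2 ^ d) 0 then bisectLog d x
      else 2 ^ d + bisectLog d (x / 2 ^ 2 ^ d) := rfl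
    rw [hrec]
    cases hquot : Nat.beq (x / 2 ^ 2 ^ d) 0 with
    | true => exact ih hx
    | false =>
      calc 2 ^ (2 ^ d + bisectLog d (x / 2 ^ 2 ^ d))
          = 2 ^ 2 ^ d * 2 ^ bisectLog d (x / 2 ^ 2 ^ d) := pow_add _ _ _
        _ ≤ 2 ^ 2 ^ d * (x / 2 ^ 2 ^ d) := by gcongr; exact ih (Nat.ne_of_beq_eq_false hquot)
        _ ≤ x := Nat.mul_div_le _ _

theorem bisectLog_pow_mul_le_log (d : ℕ) {m j : ℕ} {x : ℝ} (hm : m ≠ 0) (hx : m ≤ x) :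
    bisectLog d (m ^ j) * 0.6931 ≤ j * log x := by
  have : (0 : ℝ) < m := by positivity
  have hpow : (2 : ℝ) ^ bisectLog d (m ^ j) ≤ x ^ j := by
    calc (2 : ℝ) ^ bisectLog d (m ^ j) ≤ (m : ℝ) ^ j := by
          exact_mod_cast two_pow_bisectLog_le d (pow_ne_zero j hm)
      _ ≤ x ^ j := by gcongr
  have hlog := log_le_log (by positivity) hpow
  rw [log_pow, log_pow] at hlog
  exact hlog.trans' (by gcongr; linarith [log_two_gt_d9])

theorem log_q_succ_sub_log_q_le {k : ℕ} (hk : k ≠ 0) (h : (k + 1) * p k ≤ k * p (k + 1)) :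
    log (q (k + 1)) - log (q k) ≤
      (k * p (k + 1) / ((k + 1) * p k) - (k + 1) * p k / (k * p (k + 1))) / 2 := by
  have hp := p_pos k
  rw [← log_div (q_pos k.succ_ne_zero).ne' (q_pos hk).ne']
  convert log_le_half_sub_inv (x := k * p (k + 1) / ((k + 1) * p k)) ?_ using 2
  · rw [q, q]
    push_cast
    field_simp
  · rw [inv_div]
  · rwa [one_le_div₀ (by positivity)]

theorem two_mul_log_q_succ_sub_le {k : ℕ} (hk : k ≠ 0) :
    2 * log (q (k + 1)) - log (q k) - log (q (k + 2)) ≤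
      k * (k + 2) * p (k + 1) ^ 2 / ((k + 1) ^ 2 * p k * p (k + 2)) - 1 := by
  have hq0 := q_pos hk
  have hq1 := q_pos k.succ_ne_zero
  have hq2 := q_pos (k + 1).succ_ne_zero
  have hquot : q (k + 1) ^ 2 / (q k * q (k + 2)) =
      k * (k + 2) * p (k + 1) ^ 2 / ((k + 1) ^ 2 * p k * p (k + 2)) := by
    rw [q, q, q]
    push_cast
    field_simp
  rw [← hquot, sub_sub, ← log_mul hq0.ne' hq2.ne', ← Nat.cast_two, ← log_pow,
    ← log_div (by positivity) (by positivity)]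
  exact log_le_sub_one_of_pos (by positivity)

/-- An integer test for `r (k + 1) ^ 2 < r k * r (k + 2)`, where `a`, `b`, `c` are the partition
numbers of `k`, `k + 1`, `k + 2`. The last inequality is `sq_r_lt_of_log_q_lt` with
`log x ≤ (x - x⁻¹) / 2` applied to `q (k + 1) / q k`, `log y ≤ y - 1` applied to
`q (k + 1) ^ 2 / (q k * q (k + 2))` and `0.6931 < log 2`, after clearing denominators. -/
def convexAt (k a b c : ℕ) : Bool :=
  k + 1 ≤ b ∧ (k + 1) * a ≤ k * b ∧
    80000 * ((k + 1) * k ^ 2 * b ^ 2 * c + k ^ 3 * (k + 2) * b ^ 3) <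
      bisectLog 13 ((b / (k + 1)) ^ 16) * 6931 * ((k + 1) * k * a * b * c) +
        80000 * ((k + 1) ^ 3 * a ^ 2 * c + k ^ 2 * (k + 1) ^ 2 * a * b * c)

theorem sq_r_lt_of_convexAt {k a b c : ℕ} (hk : k ≠ 0) (ha : p k = a) (hb : p (k + 1) = b)
    (hc : p (k + 2) = c) (h : convexAt k a b c = true) : r (k + 1) ^ 2 < r k * r (k + 2) := by
  obtain ⟨hkb, hab, htest⟩ := of_decide_eq_true h
  have hk0 : (0 : ℝ) < k := by positivity
  have ha0 : (0 : ℝ) < a := ha ▸ p_pos _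
  have hb0 : (0 : ℝ) < b := hb ▸ p_pos _
  have hc0 : (0 : ℝ) < c := hc ▸ p_pos _
  have hlog : bisectLog 13 ((b / (k + 1)) ^ 16) * 0.6931 ≤ ((16 : ℕ) : ℝ) * log (q (k + 1)) :=
    bisectLog_pow_mul_le_log 13 (Nat.div_ne_zero_iff.2 ⟨k.succ_ne_zero, hkb⟩)
      (Nat.cast_div_le.trans_eq (by rw [q, hb]))
  have hfirst := log_q_succ_sub_log_q_le hk (by rw [ha, hb]; exact_mod_cast hab)
  have hsecond := two_mul_log_q_succ_sub_le hk
  rw [ha, hb] at hfirst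
  rw [ha, hb, hc] at hsecond
  refine sq_r_lt_of_log_q_lt hk ?_
  generalize bisectLog 13 ((b / (k + 1)) ^ 16) = K at hlog htest
  calc _ ≤ 2 * (k + 1) * ((k * b / ((k + 1) * a) - (k + 1) * a / (k * b)) / 2) +
        k * (k + 1) * (k * (k + 2) * b ^ 2 / ((k + 1) ^ 2 * a * c) - 1 : ℝ) := by gcongr
    _ < K * 0.6931 / 8 := by
        rify at htest
        field_simp
        linarith
    _ ≤ 2 * log (q (k + 1)) := by push_cast at hlog; linarith

end ExactComparison

section Digits

theorem mod_pow_div_pow_mod {B j k : ℕ} (x : ℕ) (h : j < k) :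
    x % B ^ k / B ^ j % B = x / B ^ j % B := by
  rw [← Nat.sub_add_cancel h.le, add_comm, pow_add, Nat.mod_mul_right_div_self,
    Nat.mod_mod_of_dvd _ (dvd_pow_self B (Nat.sub_ne_zero_of_lt h))]

theorem div_pow_div_pow (x B i j : ℕ) : x / B ^ i / B ^ j = x / B ^ (i + j) := by
  rw [Nat.div_div_eq_div_mul, pow_add]

theorem sum_mul_pow_lt {B N : ℕ} {c : ℕ → ℕ} (hc : ∀ i < N, c i < B) :
    ∑ i ∈ Finset.range N, c i * B ^ i < B ^ N := by
  rw [Finset.sum_range]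
  exact (finFunctionFinEquiv fun i : Fin N => (⟨c i, hc i i.2⟩ : Fin B)).2

theorem sum_mul_pow_div_pow_mod {B N k : ℕ} {c : ℕ → ℕ} (hc : ∀ i < N, c i < B) (hk : k < N) :
    (∑ i ∈ Finset.range N, c i * B ^ i) / B ^ k % B = c k := by
  have h := finFunctionFinEquiv.symm_apply_apply fun i : Fin N => (⟨c i, hc i i.2⟩ : Fin B)
  rw [Finset.sum_range]
  exact congrArg Fin.val (congrFun h ⟨k, hk⟩)

end Digits

section PartitionTable

/-- Up to sign, Euler's pentagonal series truncated to its first `m` pairs of terms, at `B` and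
modulo `M`; see `natCast_pentagonalSum`. Like the next two definitions it is written with
`Nat.rec`, which the kernel can evaluate. -/
def pentagonalSum (B M m : ℕ) : ℕ :=
  Nat.rec 0 (fun k s => B ^ pentagonal (k + 1) + (M - (B ^ pentagonal (-k) + s) % M)) m

/-- The inverse of `e` modulo `M` after `k` Newton steps started at `1`. -/
def newtonInv (e M k : ℕ) : ℕ :=
  Nat.rec 1 (fun _ y => y * (2 + (M - e * y % M)) % M) k

/-- Runs `convexAt` at `k, …, k + 2 ^ d - 1` on the base `B` digits of `x`, the first of which is
taken to be the partition number of `k`. Halving the range keeps the numbers short. -/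
def scan (B d : ℕ) : ℕ → ℕ → Bool :=
  Nat.rec (fun k x => convexAt k (x % B) (x / B % B) (x / B ^ 2 % B))
    (fun d ih k x => ih k (x % B ^ (2 ^ d + 2)) && ih (k + 2 ^ d) (x / B ^ 2 ^ d)) d

theorem natCast_pentagonalSum (B M m : ℕ) [NeZero M] :
    (pentagonalSum B M m : ZMod M) = (-1) ^ m * ∑ k ∈ Finset.range m,
      (-1) ^ k * ((B : ZMod M) ^ pentagonal (-k) - (B : ZMod M) ^ pentagonal (k + 1)) := by
  induction m with
  | zero => simp [pentagonalSum]
  | succ m ih =>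
    have hrec : pentagonalSum B M (m + 1) = B ^ pentagonal (m + 1) +
      (M - (B ^ pentagonal (-m) + pentagonalSum B M m) % M) := rfl
    have hsign : ((-1) ^ m * (-1) ^ m : ZMod M) = 1 := by rw [← mul_pow]; simp
    rw [hrec, Nat.cast_add, Nat.cast_sub (Nat.mod_lt _ (NeZero.pos M)).le, Finset.sum_range_succ]
    push_cast [ZMod.natCast_self, ZMod.natCast_mod]
    rw [ih]
    linear_combination
      ((B : ZMod M) ^ pentagonal (-m) - (B : ZMod M) ^ pentagonal (m + 1)) * hsign

theorem eq_sum_card_partition {B N m x : ℕ} (hm : 2 * N ≤ m * (3 * m + 1)) (heven : Even m)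
    (hB : ∀ i < N, Fintype.card (Nat.Partition i) < B) (hx : x < B ^ N)
    (hinv : pentagonalSum B (B ^ N) m * x % B ^ N = 1) :
    x = ∑ i ∈ Finset.range N, Fintype.card (Nat.Partition i) * B ^ i := by
  have : NeZero (B ^ N) := ⟨(hx.trans_le' x.zero_le).ne'⟩
  have hpow : (B : ZMod (B ^ N)) ^ N = 0 := by rw [← Nat.cast_pow, ZMod.natCast_self]
  have hsum := sum_card_partition_mul_sum_pentagonal hpow hm
  have hpent := natCast_pentagonalSum B (B ^ N) m
  rw [heven.neg_one_pow, one_mul] at hpent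
  have hmul : (pentagonalSum B (B ^ N) m : ZMod (B ^ N)) * x = 1 := by
    rw [← Nat.cast_mul, ← ZMod.natCast_mod, hinv, Nat.cast_one]
  have hcast : (x : ZMod (B ^ N)) =
      (∑ i ∈ Finset.range N, Fintype.card (Nat.Partition i) * B ^ i : ℕ) := by
    push_cast
    rw [hpent] at hmul
    exact (left_inv_eq_right_inv hsum hmul).symm
  exact ((ZMod.natCast_eq_natCast_iff _ _ _).1 hcast).eq_of_lt_of_lt hx (sum_mul_pow_lt hB)

theorem convexAt_of_scan {B d k x i : ℕ} (h : scan B d k x = true) (hi : i < 2 ^ d) :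
    convexAt (k + i) (x / B ^ i % B) (x / B ^ (i + 1) % B) (x / B ^ (i + 2) % B) = true := by
  induction d generalizing k x i with
  | zero =>
    obtain rfl : i = 0 := by simpa using hi
    simpa [scan] using h
  | succ d ih =>
    have hrec : scan B (d + 1) k x = (scan B d k (x % B ^ (2 ^ d + 2)) &&
      scan B d (k + 2 ^ d) (x / B ^ 2 ^ d)) := rfl
    rw [hrec, Bool.and_eq_true] at h
    rcases Nat.lt_or_ge i (2 ^ d) with hlt | hge
    · have hlow := ih h.1 hlt
      rwa [mod_pow_div_pow_mod _ (by omega), mod_pow_div_pow_mod _ (by omega),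
        mod_pow_div_pow_mod _ (by omega)] at hlow
    · obtain ⟨j, rfl⟩ := Nat.exists_eq_add_of_le hge
      rw [pow_succ] at hi
      have hhigh := ih h.2 (i := j) (by omega)
      rwa [div_pow_div_pow, div_pow_div_pow, div_pow_div_pow, ← add_assoc, ← add_assoc,
        add_assoc k] at hhigh

theorem sq_r_lt_of_scan {B N d k x : ℕ} (hk : k ≠ 0)
    (hx : ∀ i < N, x / B ^ i % B = Fintype.card (Nat.Partition i))
    (hscan : scan B d k (x / B ^ k % B ^ (2 ^ d + 2)) = true)
    {j : ℕ} (hkj : k ≤ j) (hjd : j < k + 2 ^ d) (hjN : j + 2 < N) :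
    r (j + 1) ^ 2 < r j * r (j + 2) := by
  obtain ⟨i, rfl⟩ := Nat.exists_eq_add_of_le hkj
  have hconv := convexAt_of_scan hscan (i := i) (by omega)
  rw [mod_pow_div_pow_mod _ (by omega), mod_pow_div_pow_mod _ (by omega),
    mod_pow_div_pow_mod _ (by omega), div_pow_div_pow, div_pow_div_pow, div_pow_div_pow,
    hx _ (by omega), hx _ (by omega), hx _ (by omega)] at hconv
  exact sq_r_lt_of_convexAt (by omega) rfl rfl rfl hconv

/-- The partition numbers below `10240`, packed as base `2 ^ 384` digits. -/
def partitionTable : ℕ :=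
  newtonInv (pentagonalSum (2 ^ 384) ((2 ^ 384) ^ 10240) 84) ((2 ^ 384) ^ 10240) 14

set_option exponentiation.threshold 10240

theorem partitionTable_lt : partitionTable < (2 ^ 384) ^ 10240 :=
  Nat.mod_lt _ (by positivity)

theorem pentagonalSum_mul_partitionTable :
    pentagonalSum (2 ^ 384) ((2 ^ 384) ^ 10240) 84 * partitionTable % (2 ^ 384) ^ 10240 = 1 := by
  decide +kernel

theorem scan_partitionTable_low :
    scan (2 ^ 384) 13 60 (partitionTable / (2 ^ 384) ^ 60 % (2 ^ 384) ^ (2 ^ 13 + 2)) = true := by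
  decide +kernel

theorem scan_partitionTable_high :
    scan (2 ^ 384) 11 8000
      (partitionTable / (2 ^ 384) ^ 8000 % (2 ^ 384) ^ (2 ^ 11 + 2)) = true := by
  decide +kernel

theorem sq_r_lt_of_lt (hp : ∀ i < 10240, Fintype.card (Nat.Partition i) < 2 ^ 384)
    {k : ℕ} (hk : 60 ≤ k) (hk' : k < 10048) : r (k + 1) ^ 2 < r k * r (k + 2) := by
  have hlt := partitionTable_lt
  have hinv := pentagonalSum_mul_partitionTable
  have hlow := scan_partitionTable_low
  have hhigh := scan_partitionTable_high
  generalize partitionTable = x at hlt hinv hlow hhigh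
  have hdigit (i : ℕ) (hi : i < 10240) :
      x / (2 ^ 384) ^ i % 2 ^ 384 = Fintype.card (Nat.Partition i) := by
    rw [eq_sum_card_partition (by norm_num) (by decide) hp hlt hinv,
      sum_mul_pow_div_pow_mod hp hi]
  rcases Nat.lt_or_ge k 8000 with h | h
  · exact sq_r_lt_of_scan (by norm_num) hdigit hlow hk (by omega) (by omega)
  · exact sq_r_lt_of_scan (by norm_num) hdigit hhigh h (by omega) (by omega)

end PartitionTable

section GeneratingFunction

open PowerSeries PowerSeries.WithPiTopology Filter Topology

theorem norm_pow_succ_lt_one {z : ℂ} (hz : ‖z‖ < 1) (m : ℕ) : ‖z ^ (m + 1)‖ < 1 := by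
  rw [norm_pow]
  exact pow_lt_one₀ (norm_nonneg z) hz m.succ_ne_zero

theorem hasSum_coeff_mul_mul_pow {𝕜 : Type*} [RCLike 𝕜] {f g : 𝕜⟦X⟧} {z a b : 𝕜}
    (hf : HasSum (fun n => coeff n f * z ^ n) a) (hg : HasSum (fun n => coeff n g * z ^ n) b) :
    HasSum (fun n => coeff n (f * g) * z ^ n) (a * b) := by
  have hterm (n : ℕ) : coeff n (f * g) * z ^ n = ∑ ij ∈ Finset.HasAntidiagonal.antidiagonal n,
      coeff ij.1 f * z ^ ij.1 * (coeff ij.2 g * z ^ ij.2) := by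
    rw [coeff_mul, Finset.sum_mul]
    refine Finset.sum_congr rfl fun ij hij => ?_
    rw [← Finset.HasAntidiagonal.mem_antidiagonal.1 hij, pow_add]
    ring
  have hf' := hf.summable.norm
  have hg' := hg.summable.norm
  simp_rw [hterm, ← hf.tsum_eq, ← hg.tsum_eq,
    tsum_mul_tsum_eq_tsum_sum_antidiagonal_of_summable_norm hf' hg']
  exact (summable_norm_sum_mul_antidiagonal_of_summable_norm hf' hg').of_norm.hasSum

theorem hasSum_coeff_prod_mul_pow {𝕜 ι : Type*} [RCLike 𝕜] {f : ι → 𝕜⟦X⟧} {z : 𝕜} {a : ι → 𝕜}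
    (h : ∀ i, HasSum (fun n => coeff n (f i) * z ^ n) (a i)) (t : Finset ι) :
    HasSum (fun n => coeff n (∏ i ∈ t, f i) * z ^ n) (∏ i ∈ t, a i) := by
  induction t using Finset.cons_induction with
  | empty =>
    refine (hasSum_ite_eq 0 1).congr_fun fun n => ?_
    rcases eq_or_ne n 0 with rfl | hn <;> simp [coeff_one, *]
  | cons i t hi ih =>
    rw [Finset.prod_cons, Finset.prod_cons]
    exact hasSum_coeff_mul_mul_pow (h i) ih

theorem hasSum_coeff_tsum_X_pow_mul_mul_pow (m : ℕ) {z : ℂ} (hz : ‖z‖ < 1) :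
    HasSum (fun n => coeff n (∑' j : ℕ, (X : ℂ⟦X⟧) ^ ((m + 1) * j)) * z ^ n)
      (1 - z ^ (m + 1))⁻¹ := by
  have hinj : Function.Injective ((m + 1) * ·) := mul_right_injective₀ m.succ_ne_zero
  have hseries : HasSum (fun j => (X : ℂ⟦X⟧) ^ ((m + 1) * j))
      (PowerSeries.mk fun n => if m + 1 ∣ n then 1 else 0) := by
    refine (hasSum_iff_hasSum_coeff ℂ).2 fun n => ?_
    simp only [coeff_X_pow, coeff_mk]
    split_ifs with h
    · obtain ⟨c, rfl⟩ := h
      simpa only [hinj.eq_iff, eq_comm] using hasSum_ite_eq c (1 : ℂ)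
    · have hne (j : ℕ) : n ≠ (m + 1) * j := fun hj => h ⟨j, hj⟩
      simp [hne, hasSum_zero]
  rw [hseries.tsum_eq, ← hinj.hasSum_iff fun n hn => ?_]
  · simpa [Function.comp_def, pow_mul] using
      hasSum_geometric_of_norm_lt_one (norm_pow_succ_lt_one hz m)
  · rw [coeff_mk, if_neg, zero_mul]
    rintro ⟨j, rfl⟩
    exact hn ⟨j, rfl⟩

theorem card_restricted_le_p (K n : ℕ) :
    ((Nat.Partition.restricted n (· ≤ K)).card : ℝ) ≤ p n :=
  Nat.cast_le.2 (Finset.card_le_univ _)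

theorem card_restricted_eq_p {K n : ℕ} (h : n ≤ K) :
    ((Nat.Partition.restricted n (· ≤ K)).card : ℝ) = p n := by
  rw [p, Nat.Partition.restricted, Finset.filter_true_of_mem, Finset.card_univ]
  exact fun x _ i hi => (Multiset.le_sum_of_mem hi).trans (x.parts_sum.le.trans h)

theorem hasSum_card_restricted_mul_pow (K : ℕ) {z : ℂ} (hz : ‖z‖ < 1) :
    HasSum (fun n => ((Nat.Partition.restricted n (· ≤ K)).card : ℂ) * z ^ n)
      (∏ i ∈ Finset.range K, (1 - z ^ (i + 1))⁻¹) := by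
  have hprod : (PowerSeries.mk fun n => ((Nat.Partition.restricted n (· ≤ K)).card : ℂ)) =
      ∏ i ∈ Finset.range K, ∑' j : ℕ, X ^ ((i + 1) * j) := by
    refine (Nat.Partition.hasProd_powerSeriesMk_card_restricted ℂ (· ≤ K)).unique ?_
    rw [← Finset.prod_congr rfl fun i hi => if_pos (Finset.mem_range.1 hi)]
    exact hasProd_prod_of_ne_finset_one fun i hi => if_neg (by simpa using hi)
  have h := hasSum_coeff_prod_mul_pow
    (fun i : ℕ => hasSum_coeff_tsum_X_pow_mul_mul_pow i hz) (Finset.range K)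
  simpa only [← hprod, coeff_mk] using h

/-- The logarithm of the generating function `∏ (1 - z ^ i)⁻¹` of the partition numbers, as a double
series which may be summed in either order. -/
noncomputable def logGen (z : ℂ) : ℂ :=
  ∑' x : ℕ × ℕ, z ^ ((x.1 + 1) * (x.2 + 1)) / ((x.2 : ℂ) + 1)

theorem one_le_norm_natCast_add_one (m : ℕ) : 1 ≤ ‖(m : ℂ) + 1‖ := by
  rw [← Nat.cast_succ, Complex.norm_natCast]
  exact_mod_cast m.succ_pos

theorem hasSum_logGen {z : ℂ} (hz : ‖z‖ < 1) :
    HasSum (fun x : ℕ × ℕ => z ^ ((x.1 + 1) * (x.2 + 1)) / ((x.2 : ℂ) + 1)) (logGen z) := by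
  have hg := summable_geometric_of_lt_one (norm_nonneg z) hz
  refine (Summable.of_norm_bounded (hg.mul_of_nonneg hg (fun _ => by positivity)
    (fun _ => by positivity)) fun x => ?_).hasSum
  rw [norm_div, norm_pow, ← pow_add]
  refine (div_le_self (by positivity) (one_le_norm_natCast_add_one _)).trans ?_
  exact pow_le_pow_of_le_one (norm_nonneg _) hz.le (by nlinarith)

theorem hasSum_pow_div_one_sub_pow {z : ℂ} (hz : ‖z‖ < 1) :
    HasSum (fun m : ℕ => z ^ (m + 1) / ((m + 1) * (1 - z ^ (m + 1)))) (logGen z) := by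
  refine ((Equiv.prodComm ℕ ℕ).hasSum_iff.2 (hasSum_logGen hz)).prod_fiberwise fun m => ?_
  have h := ((hasSum_geometric_of_norm_lt_one (norm_pow_succ_lt_one hz m)).mul_left
    (z ^ (m + 1))).div_const ((m : ℂ) + 1)
  rw [← div_eq_mul_inv, div_div, mul_comm (1 - _)] at h
  refine h.congr_fun fun i => ?_
  rw [← pow_succ', ← pow_mul, mul_comm (m + 1)]
  rfl

theorem hasSum_neg_log_one_sub_pow {z : ℂ} (hz : ‖z‖ < 1) :
    HasSum (fun i : ℕ => -Complex.log (1 - z ^ (i + 1))) (logGen z) := by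
  refine (hasSum_logGen hz).prod_fiberwise fun i => ?_
  have h := (hasSum_nat_add_iff' 1).2
    (Complex.hasSum_taylorSeries_neg_log (norm_pow_succ_lt_one hz i))
  simpa [pow_mul] using h

theorem tendsto_prod_one_sub_pow_inv {z : ℂ} (hz : ‖z‖ < 1) :
    Tendsto (fun K : ℕ => ∏ i ∈ Finset.range K, (1 - z ^ (i + 1))⁻¹) atTop
      (𝓝 (Complex.exp (logGen z))) := by
  refine ((Complex.continuous_exp.tendsto _).comp
    (hasSum_neg_log_one_sub_pow hz).tendsto_sum_nat).congr fun K => ?_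
  rw [Function.comp_apply, Complex.exp_sum]
  refine Finset.prod_congr rfl fun i _ => ?_
  rw [Complex.exp_neg, Complex.exp_log]
  exact sub_ne_zero.2 fun h => (norm_pow_succ_lt_one hz i).ne (by simp [← h])

theorem summable_p_mul_pow {x : ℝ} (hx0 : 0 ≤ x) (hx : x < 1) :
    Summable fun n => p n * x ^ n := by
  have hx' : ‖(x : ℂ)‖ < 1 := by rwa [Complex.norm_real, Real.norm_of_nonneg hx0]
  obtain ⟨C, hC⟩ := (tendsto_prod_one_sub_pow_inv hx').norm.bddAbove_range
  refine summable_of_sum_range_le (c := C) (fun n => mul_nonneg (p_pos n).le (by positivity))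
    fun N => ?_
  have hsum : HasSum (fun n => ((Nat.Partition.restricted n (· ≤ N)).card : ℝ) * x ^ n)
      (∏ i ∈ Finset.range N, (1 - x ^ (i + 1))⁻¹) := by
    exact_mod_cast hasSum_card_restricted_mul_pow N hx'
  calc ∑ n ∈ Finset.range N, p n * x ^ n
      = ∑ n ∈ Finset.range N, ((Nat.Partition.restricted n (· ≤ N)).card : ℝ) * x ^ n := by
        refine Finset.sum_congr rfl fun n hn => ?_
        rw [card_restricted_eq_p (Finset.mem_range.1 hn).le]
    _ ≤ ∏ i ∈ Finset.range N, (1 - x ^ (i + 1))⁻¹ :=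
        sum_le_hasSum _ (fun n _ => by positivity) hsum
    _ ≤ ‖∏ i ∈ Finset.range N, (1 - (x : ℂ) ^ (i + 1))⁻¹‖ := by
        refine (le_abs_self _).trans_eq ?_
        rw [← Real.norm_eq_abs, ← Complex.norm_real]
        push_cast
        rfl
    _ ≤ C := hC ⟨N, rfl⟩

theorem hasSum_p_mul_pow {z : ℂ} (hz : ‖z‖ < 1) :
    HasSum (fun n => (p n : ℂ) * z ^ n) (Complex.exp (logGen z)) := by
  have hsum := summable_p_mul_pow (norm_nonneg z) hz
  have hs : Summable fun n => (p n : ℂ) * z ^ n := by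
    refine Summable.of_norm_bounded hsum fun n => ?_
    rw [norm_mul, norm_pow, Complex.norm_real, Real.norm_of_nonneg (p_pos n).le]
  refine hs.hasSum_iff.2 (tendsto_nhds_unique ?_ (tendsto_prod_one_sub_pow_inv hz))
  simp_rw [← (hasSum_card_restricted_mul_pow _ hz).tsum_eq]
  refine tendsto_tsum_of_dominated_convergence hsum (fun n => ?_)
    (Eventually.of_forall fun K n => ?_)
  · refine tendsto_const_nhds.congr' ?_
    filter_upwards [eventually_ge_atTop n] with K hK
    rw [← card_restricted_eq_p hK, Complex.ofReal_natCast]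
  · rw [norm_mul, norm_pow, Complex.norm_natCast]
    exact mul_le_mul_of_nonneg_right (card_restricted_le_p K n) (by positivity)

end GeneratingFunction

section CircleIntegral

open Filter Topology MeasureTheory

theorem norm_exp_neg_add_mul_I (s t : ℝ) : ‖Complex.exp (-s + t * Complex.I)‖ = exp (-s) := by
  simp [Complex.norm_exp]

theorem norm_exp_neg_add_mul_I_lt_one {s : ℝ} (hs : 0 < s) (t : ℝ) :
    ‖Complex.exp (-s + t * Complex.I)‖ < 1 := by
  simpa [norm_exp_neg_add_mul_I]

theorem exp_neg_add_mul_I_pow (s t : ℝ) (n : ℕ) :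
    Complex.exp (-s + t * Complex.I) ^ n =
      Complex.exp (-(n * s : ℝ) + (n * t : ℝ) * Complex.I) := by
  rw [← Complex.exp_nat_mul]
  push_cast
  ring_nf

theorem integral_exp_int_mul_I (k : ℤ) :
    ∫ t in -π..π, Complex.exp (k * t * Complex.I) = if k = 0 then 2 * (π : ℂ) else 0 := by
  split_ifs with hk
  · simp [hk, two_mul]
  · have hc : (k : ℂ) * Complex.I ≠ 0 := mul_ne_zero (by exact_mod_cast hk) Complex.I_ne_zero
    simp_rw [mul_right_comm (k : ℂ)]
    rw [integral_exp_mul_complex hc, sub_eq_zero.2, zero_div]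
    exact Complex.exp_eq_exp_iff_exists_int.2 ⟨k, by push_cast; ring⟩

theorem integral_mul_pow_mul_exp (c : ℂ) (s : ℝ) (n k : ℕ) :
    ∫ t in -π..π, c * Complex.exp (-s + t * Complex.I) ^ n * Complex.exp (-(k * t * Complex.I)) =
      if n = k then 2 * π * (c * Complex.exp (-(k * s))) else 0 := by
  have hmode (t : ℝ) : c * Complex.exp (-s + t * Complex.I) ^ n *
      Complex.exp (-(k * t * Complex.I)) =
      c * Complex.exp (-(n * s)) * Complex.exp ((n - k : ℤ) * t * Complex.I) := by
    rw [← Complex.exp_nat_mul, mul_assoc c, mul_assoc c, ← Complex.exp_add, ← Complex.exp_add]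
    push_cast
    ring_nf
  simp_rw [hmode]
  rw [intervalIntegral.integral_const_mul, integral_exp_int_mul_I]
  simp only [sub_eq_zero, Nat.cast_inj, mul_ite, mul_zero]
  split_ifs with h
  · rw [h, mul_comm]
  · rfl

theorem integral_mul_exp_of_hasSum {a : ℕ → ℂ} {f : ℝ → ℂ} {s : ℝ}
    (ha : Summable fun n => ‖a n‖ * exp (-s) ^ n)
    (hf : ∀ t : ℝ, HasSum (fun n => a n * Complex.exp (-s + t * Complex.I) ^ n) (f t)) (k : ℕ) :
    ∫ t in -π..π, f t * Complex.exp (-(k * t * Complex.I)) =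
      2 * π * (a k * Complex.exp (-(k * s))) := by
  have h := intervalIntegral.hasSum_integral_of_dominated_convergence (μ := volume)
    (a := -π) (b := π) (fun n _ => ‖a n‖ * exp (-s) ^ n)
    (fun n => Continuous.aestronglyMeasurable (by fun_prop))
    (fun n => Eventually.of_forall fun t _ => ?_) (Eventually.of_forall fun t _ => ha) (by simp)
    (Eventually.of_forall fun t _ => (hf t).mul_right (Complex.exp (-(k * t * Complex.I))))
  · simp_rw [integral_mul_pow_mul_exp] at h
    refine h.unique ((hasSum_ite_eq k _).congr_fun fun n => ?_)
    split_ifs with hn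
    · rw [hn]
    · rfl
  · rw [norm_mul, norm_mul, norm_pow, norm_exp_neg_add_mul_I]
    simp [Complex.norm_exp]

theorem continuous_logGen_exp {s : ℝ} (hs : 0 < s) :
    Continuous fun t : ℝ => logGen (Complex.exp (-s + t * Complex.I)) := by
  have hlt : exp (-s) < 1 := exp_lt_one_iff.2 (neg_lt_zero.2 hs)
  have hden (m : ℕ) (t : ℝ) : 1 - exp (-s) ≤
      ‖1 - Complex.exp (-s + t * Complex.I) ^ (m + 1)‖ := by
    have hsub := norm_sub_norm_le (1 : ℂ) (Complex.exp (-s + t * Complex.I) ^ (m + 1))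
    rw [norm_one, norm_pow, norm_exp_neg_add_mul_I] at hsub
    have hpow : exp (-s) ^ (m + 1) ≤ exp (-s) :=
      pow_le_of_le_one (exp_pos _).le hlt.le m.succ_ne_zero
    linarith
  simp_rw [← fun t => (hasSum_pow_div_one_sub_pow (norm_exp_neg_add_mul_I_lt_one hs t)).tsum_eq]
  refine continuous_tsum (u := fun m : ℕ => exp (-s) ^ (m + 1) / (1 - exp (-s)))
    (fun m => ?_) ?_ fun m t => ?_
  · refine Continuous.div (by fun_prop) (by fun_prop) fun t => ?_
    refine mul_ne_zero (Nat.cast_add_one_ne_zero m) (norm_pos_iff.1 ?_)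
    linarith [hden m t]
  · exact ((summable_nat_add_iff 1).2
      (summable_geometric_of_lt_one (exp_pos _).le hlt)).div_const _
  · rw [norm_div, norm_mul, norm_pow, norm_exp_neg_add_mul_I]
    refine div_le_div_of_nonneg_left (by positivity) (by linarith) ?_
    nlinarith [one_le_norm_natCast_add_one m, hden m t]

/-- The real part of the logarithm of the generating function at `exp (-s + t * I)`. -/
noncomputable def genRe (s t : ℝ) : ℝ := (logGen (Complex.exp (-s + t * Complex.I))).re

/-- The imaginary part of the logarithm of the generating function at `exp (-s + t * I)`. -/
noncomputable def genIm (s t : ℝ) : ℝ := (logGen (Complex.exp (-s + t * Complex.I))).im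

theorem continuous_genRe {s : ℝ} (hs : 0 < s) : Continuous (genRe s) :=
  Complex.continuous_re.comp (continuous_logGen_exp hs)

theorem continuous_genIm {s : ℝ} (hs : 0 < s) : Continuous (genIm s) :=
  Complex.continuous_im.comp (continuous_logGen_exp hs)

theorem integral_exp_genRe_mul_cos {s : ℝ} (hs : 0 < s) (k : ℕ) :
    ∫ t in -π..π, exp (genRe s t) * cos (genIm s t - k * t) = 2 * π * (p k * exp (-(k * s))) := by
  have hcauchy := integral_mul_exp_of_hasSum (a := fun n => (p n : ℂ)) (s := s)
    (by simpa [Real.norm_of_nonneg (p_pos _).le] using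
      summable_p_mul_pow (exp_pos (-s)).le (exp_lt_one_iff.2 (neg_lt_zero.2 hs)))
    (fun t => hasSum_p_mul_pow (norm_exp_neg_add_mul_I_lt_one hs t)) k
  have hcont : Continuous fun t : ℝ => Complex.exp (logGen (Complex.exp (-s + t * Complex.I))) *
      Complex.exp (-(k * t * Complex.I)) := by
    have := continuous_logGen_exp hs
    fun_prop
  have hre := congrArg Complex.re hcauchy
  rw [← Complex.reCLM_apply, ← Complex.reCLM.intervalIntegral_comp_comm
    (hcont.intervalIntegrable _ _)] at hre
  convert hre using 1
  · refine intervalIntegral.integral_congr fun t _ => ?_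
    simp [← Complex.exp_add, Complex.exp_re, genRe, genIm, sub_eq_add_neg]
  · norm_cast

theorem cosh_sub_cos_pos {x : ℝ} (hx : x ≠ 0) (y : ℝ) : 0 < cosh x - cos y :=
  sub_pos.2 ((cos_le_one y).trans_lt (Real.one_lt_cosh.2 hx))

theorem exp_neg_add_mul_I_re (x y : ℝ) :
    (Complex.exp (-x + y * Complex.I)).re = exp (-x) * cos y := by
  simp [Complex.exp_re]

theorem exp_neg_add_mul_I_im (x y : ℝ) :
    (Complex.exp (-x + y * Complex.I)).im = exp (-x) * sin y := by
  simp [Complex.exp_im]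

theorem normSq_one_sub_exp (x y : ℝ) :
    Complex.normSq (1 - Complex.exp (-x + y * Complex.I)) =
      2 * exp (-x) * (cosh x - cos y) := by
  have hcosh : 2 * exp (-x) * cosh x = 1 + exp (-x) ^ 2 := by
    rw [cosh_eq, exp_neg]
    field_simp
  rw [Complex.normSq_apply, Complex.sub_re, Complex.sub_im, Complex.one_re, Complex.one_im,
    exp_neg_add_mul_I_re, exp_neg_add_mul_I_im]
  linear_combination exp (-x) ^ 2 * sin_sq_add_cos_sq y - hcosh

theorem exp_div_one_sub_exp_re {x : ℝ} (hx : x ≠ 0) (y : ℝ) :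
    (Complex.exp (-x + y * Complex.I) / (1 - Complex.exp (-x + y * Complex.I))).re =
      (sinh x / (cosh x - cos y) - 1) / 2 := by
  have hpos := cosh_sub_cos_pos hx y
  have := exp_pos (-x)
  rw [Complex.div_re, normSq_one_sub_exp, Complex.sub_re, Complex.sub_im, Complex.one_re,
    Complex.one_im, exp_neg_add_mul_I_re, exp_neg_add_mul_I_im]
  field_simp
  linear_combination cosh_sub_sinh x - exp (-x) * sin_sq_add_cos_sq y

theorem exp_div_one_sub_exp_im {x : ℝ} (hx : x ≠ 0) (y : ℝ) :
    (Complex.exp (-x + y * Complex.I) / (1 - Complex.exp (-x + y * Complex.I))).im =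
      sin y / (cosh x - cos y) / 2 := by
  have hpos := cosh_sub_cos_pos hx y
  rw [Complex.div_im, normSq_one_sub_exp, Complex.sub_re, Complex.sub_im, Complex.one_re,
    Complex.one_im, exp_neg_add_mul_I_re, exp_neg_add_mul_I_im]
  field_simp
  ring

theorem exp_pow_div_one_sub_exp_pow (s t : ℝ) (m : ℕ) :
    Complex.exp (-s + t * Complex.I) ^ (m + 1) /
      ((m + 1) * (1 - Complex.exp (-s + t * Complex.I) ^ (m + 1))) =
    Complex.exp (-((m + 1) * s : ℝ) + ((m + 1) * t : ℝ) * Complex.I) /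
      (1 - Complex.exp (-((m + 1) * s : ℝ) + ((m + 1) * t : ℝ) * Complex.I)) /
        ((m + 1 : ℝ) : ℂ) := by
  rw [exp_neg_add_mul_I_pow, div_div, mul_comm (1 - _)]
  push_cast
  rfl

theorem hasSum_genRe {s : ℝ} (hs : 0 < s) (t : ℝ) :
    HasSum (fun m : ℕ => (sinh ((m + 1) * s) / (cosh ((m + 1) * s) - cos ((m + 1) * t)) - 1) /
      (2 * (m + 1))) (genRe s t) := by
  refine (Complex.hasSum_re (hasSum_pow_div_one_sub_pow
    (norm_exp_neg_add_mul_I_lt_one hs t))).congr_fun fun m => ?_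
  rw [exp_pow_div_one_sub_exp_pow, Complex.div_ofReal_re, exp_div_one_sub_exp_re (by positivity),
    div_div]

theorem hasSum_genIm {s : ℝ} (hs : 0 < s) (t : ℝ) :
    HasSum (fun m : ℕ => sin ((m + 1) * t) / (cosh ((m + 1) * s) - cos ((m + 1) * t)) /
      (2 * (m + 1))) (genIm s t) := by
  refine (Complex.hasSum_im (hasSum_pow_div_one_sub_pow
    (norm_exp_neg_add_mul_I_lt_one hs t))).congr_fun fun m => ?_
  rw [exp_pow_div_one_sub_exp_pow, Complex.div_ofReal_im, exp_div_one_sub_exp_im (by positivity),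
    div_div (_ / _)]

end CircleIntegral

section Hyperbolic

theorem cosh_eq_one_add_two_mul_sinh_half_sq (x : ℝ) : cosh x = 1 + 2 * sinh (x / 2) ^ 2 := by
  have h := cosh_two_mul (x / 2)
  rw [mul_div_cancel₀ x two_ne_zero, cosh_sq] at h
  linarith

theorem sinh_eq_two_mul_sinh_half_mul_cosh_half (x : ℝ) :
    sinh x = 2 * sinh (x / 2) * cosh (x / 2) := by
  rw [← sinh_two_mul, mul_div_cancel₀ x two_ne_zero]

theorem sinh_le_mul_cosh {x : ℝ} (hx : 0 ≤ x) : sinh x ≤ x * cosh x := by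
  have h := (convex_Icc 0 x).image_sub_le_mul_sub_of_deriv_le continuous_sinh.continuousOn
    differentiable_sinh.differentiableOn (C := cosh x) (fun y hy => ?_) 0 ⟨le_rfl, hx⟩ x
    ⟨hx, le_rfl⟩ hx
  · rwa [sinh_zero, sub_zero, sub_zero, mul_comm] at h
  · rw [interior_Icc] at hy
    rw [Real.deriv_sinh, cosh_le_cosh, abs_of_pos hy.1, abs_of_nonneg hx]
    exact hy.2.le

theorem two_mul_cosh_sub_one_le {x : ℝ} (hx : 0 ≤ x) : 2 * (cosh x - 1) ≤ x * sinh x := by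
  have hhalf : 0 ≤ x / 2 := by positivity
  rw [cosh_eq_one_add_two_mul_sinh_half_sq x, sinh_eq_two_mul_sinh_half_mul_cosh_half x]
  nlinarith [sinh_nonneg_iff.2 hhalf, sinh_le_mul_cosh hhalf]

theorem pow_three_mul_cosh_le_mul_cosh_div {x : ℝ} (hx : 0 ≤ x) (n : ℕ) :
    x ^ 3 * cosh x ≤ sinh x ^ 3 * cosh (x / 2 ^ n) := by
  induction n generalizing x with
  | zero =>
    have := self_le_sinh_iff.2 hx
    rw [pow_zero, div_one]
    gcongr
  | succ n ih =>
    have hhalf := ih (x := x / 2) (by positivity)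
    rw [div_div, ← pow_succ'] at hhalf
    have hquartic : cosh x ≤ cosh (x / 2) ^ 4 := by
      rw [cosh_eq_one_add_two_mul_sinh_half_sq, sinh_sq]
      nlinarith [sq_nonneg (cosh (x / 2) ^ 2 - 1)]
    calc x ^ 3 * cosh x
        ≤ x ^ 3 * cosh (x / 2) ^ 4 := by gcongr
      _ = 8 * cosh (x / 2) ^ 3 * ((x / 2) ^ 3 * cosh (x / 2)) := by ring
      _ ≤ 8 * cosh (x / 2) ^ 3 * (sinh (x / 2) ^ 3 * cosh (x / 2 ^ (n + 1))) := by
        have := cosh_pos (x / 2)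
        gcongr
      _ = sinh x ^ 3 * cosh (x / 2 ^ (n + 1)) := by
        rw [sinh_eq_two_mul_sinh_half_mul_cosh_half x]
        ring

/-- Lazarević's inequality. -/
theorem pow_three_mul_cosh_le {x : ℝ} (hx : 0 ≤ x) : x ^ 3 * cosh x ≤ sinh x ^ 3 := by
  have hlim : Filter.Tendsto (fun n : ℕ => sinh x ^ 3 * cosh (x / 2 ^ n)) Filter.atTop
      (nhds (sinh x ^ 3 * cosh 0)) := by
    refine ((continuous_cosh.tendsto 0).comp ?_).const_mul _
    exact tendsto_const_nhds.div_atTop (tendsto_pow_atTop_atTop_of_one_lt one_lt_two)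
  rw [cosh_zero, mul_one] at hlim
  exact ge_of_tendsto' hlim (pow_three_mul_cosh_le_mul_cosh_div hx)

theorem pow_three_mul_sinh_le {x : ℝ} (hx : 0 ≤ x) : x ^ 3 * sinh x ≤ 4 * (cosh x - 1) ^ 2 := by
  have hhalf : 0 ≤ x / 2 := by positivity
  rw [cosh_eq_one_add_two_mul_sinh_half_sq x, sinh_eq_two_mul_sinh_half_mul_cosh_half x]
  nlinarith [mul_le_mul_of_nonneg_left (pow_three_mul_cosh_le hhalf) (sinh_nonneg_iff.2 hhalf)]

theorem sq_div_two_le_cosh_sub_one (x : ℝ) : x ^ 2 / 2 ≤ cosh x - 1 := by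
  have h : (x / 2) ^ 2 ≤ sinh (x / 2) ^ 2 := by
    rw [sq_le_sq, abs_sinh]
    exact self_le_sinh_iff.2 (abs_nonneg _)
  rw [cosh_eq_one_add_two_mul_sinh_half_sq]
  linarith

theorem cosh_sub_one_le {x : ℝ} (hx : |x| ≤ 1) : cosh x - 1 ≤ x ^ 2 / 2 + 3 / 16 * x ^ 4 := by
  have hx2 : x ^ 2 ≤ 1 := (sq_le_one_iff_abs_le_one x).2 hx
  have hexp := exp_bound' (x := x ^ 2 / 2) (by positivity) (by linarith) (n := 2) (by norm_num)
  norm_num [Finset.sum_range_succ] at hexp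
  linarith [cosh_le_exp_half_sq x]

theorem cosh_sub_one_pos {x : ℝ} (hx : x ≠ 0) : 0 < cosh x - 1 :=
  sub_pos.2 (one_lt_cosh.2 hx)

theorem two_div_le_sinh_div {x : ℝ} (hx : 0 < x) : 2 / x ≤ sinh x / (cosh x - 1) := by
  rw [div_le_div_iff₀ hx (cosh_sub_one_pos hx.ne'), mul_comm (sinh x)]
  exact two_mul_cosh_sub_one_le hx.le

theorem one_le_sinh_div {x : ℝ} (hx : 0 < x) : 1 ≤ sinh x / (cosh x - 1) := by
  rw [le_div_iff₀ (cosh_sub_one_pos hx.ne')]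
  linarith [cosh_sub_sinh x, exp_le_one_iff.2 (neg_nonpos.2 hx.le)]

theorem sinh_div_sub_one_le {x : ℝ} (hx : 0 < x) : sinh x / (cosh x - 1) - 1 ≤ 2 / x := by
  have hx1 := add_one_le_exp x
  have hmul : exp (-x) * exp x = 1 := by rw [← exp_add, neg_add_cancel, exp_zero]
  have hneg : exp (-x) * x ≤ 1 - exp (-x) := by nlinarith [exp_pos (-x)]
  rw [sub_le_iff_le_add, div_add_one hx.ne', div_le_div_iff₀ (cosh_sub_one_pos hx.ne') hx,
    cosh_eq, sinh_eq]
  nlinarith [mul_le_mul_of_nonneg_left hneg (show 0 ≤ exp x - 1 by linarith)]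

end Hyperbolic

section CriticalRadius

theorem hasSum_inv_succ_sq : HasSum (fun m : ℕ => 1 / ((m : ℝ) + 1) ^ 2) (π ^ 2 / 6) := by
  simpa using (hasSum_nat_add_iff' 1).2 hasSum_zeta_two

theorem zeta_two_le_sum_add {M : ℕ} (hM : M ≠ 0) :
    π ^ 2 / 6 ≤ ∑ m ∈ Finset.range M, 1 / ((m : ℝ) + 1) ^ 2 + 1 / (M : ℝ) := by
  refine le_of_tendsto hasSum_inv_succ_sq.tendsto_sum_nat
    ((Filter.eventually_ge_atTop M).mono fun N hN => ?_)
  have htail : ∑ m ∈ Finset.Ico M N, 1 / ((m : ℝ) + 1) ^ 2 ≤ 1 / (M : ℝ) - 1 / N := by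
    have h := sum_Ioc_inv_sq_le_sub (α := ℝ) hM hN
    rw [← Finset.Ico_add_one_add_one_eq_Ioc, ← Finset.sum_Ico_add'] at h
    simpa only [one_div, Nat.cast_add_one] using h
  rw [← Finset.sum_range_add_sum_Ico _ hN]
  linarith [show 0 ≤ 1 / (N : ℝ) by positivity]

theorem hasSum_genRe_zero {s : ℝ} (hs : 0 < s) :
    HasSum (fun m : ℕ => (sinh ((m + 1) * s) / (cosh ((m + 1) * s) - 1) - 1) / (2 * (m + 1)))
      (genRe s 0) := by
  simpa only [mul_zero, cos_zero] using hasSum_genRe hs 0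

theorem genRe_zero_le {s : ℝ} (hs : 0 < s) : genRe s 0 ≤ π ^ 2 / 6 / s := by
  refine hasSum_le (fun m => ?_) (hasSum_genRe_zero hs) (hasSum_inv_succ_sq.div_const s)
  have h := sinh_div_sub_one_le (x := (m + 1) * s) (by positivity)
  calc _ ≤ 2 / ((m + 1) * s) / (2 * ((m : ℝ) + 1)) := by gcongr
    _ = _ := by field_simp

theorem le_genRe_zero {s : ℝ} (hs : 0 < s) {M : ℕ} (hM : M ≠ 0) :
    (π ^ 2 / 6 - 1 / (M : ℝ)) / s - (1 + log M) / 2 ≤ genRe s 0 := by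
  have hterm (m : ℕ) : 1 / ((m : ℝ) + 1) ^ 2 / s - 1 / (m + 1) / 2 ≤
      (sinh ((m + 1) * s) / (cosh ((m + 1) * s) - 1) - 1) / (2 * (m + 1)) := by
    have h := two_div_le_sinh_div (x := (m + 1) * s) (by positivity)
    calc _ = (2 / ((m + 1) * s) - 1) / (2 * ((m : ℝ) + 1)) := by field_simp
      _ ≤ _ := by gcongr
  have hharmonic : ∑ m ∈ Finset.range M, 1 / ((m : ℝ) + 1) ≤ 1 + log M := by
    simpa [harmonic] using harmonic_le_one_add_log M
  calc (π ^ 2 / 6 - 1 / (M : ℝ)) / s - (1 + log M) / 2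
      ≤ (∑ m ∈ Finset.range M, 1 / ((m : ℝ) + 1) ^ 2) / s -
        (∑ m ∈ Finset.range M, 1 / ((m : ℝ) + 1)) / 2 := by
        gcongr
        linarith [zeta_two_le_sum_add hM]
    _ = ∑ m ∈ Finset.range M, (1 / ((m : ℝ) + 1) ^ 2 / s - 1 / (m + 1) / 2) := by
        rw [Finset.sum_sub_distrib, Finset.sum_div, Finset.sum_div]
    _ ≤ _ := Finset.sum_le_sum fun m _ => hterm m
    _ ≤ genRe s 0 := sum_le_hasSum _ (fun m _ => div_nonneg
        (sub_nonneg.2 (one_le_sinh_div (by positivity))) (by positivity)) (hasSum_genRe_zero hs)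

theorem p_le_exp {s : ℝ} (hs : 0 < s) (n : ℕ) : p n ≤ exp (n * s + π ^ 2 / 6 / s) := by
  have hsum := Complex.hasSum_re (hasSum_p_mul_pow (norm_exp_neg_add_mul_I_lt_one hs 0))
  have hterm (k : ℕ) : ((p k : ℂ) * Complex.exp (-s + (0 : ℝ) * Complex.I) ^ k).re =
      p k * exp (-(k * s)) := by
    rw [Complex.re_ofReal_mul, ← Complex.exp_nat_mul, Complex.exp_re]
    simp
  simp only [hterm] at hsum
  have h : p n * exp (-(n * s)) ≤ exp (π ^ 2 / 6 / s) := calc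
    p n * exp (-(n * s)) ≤ _ :=
      le_hasSum hsum n fun k _ => mul_nonneg (p_pos k).le (exp_pos _).le
    _ ≤ exp (genRe s 0) := (Complex.re_le_norm _).trans_eq (Complex.norm_exp _)
    _ ≤ exp (π ^ 2 / 6 / s) := exp_le_exp.2 (genRe_zero_le hs)
  rwa [exp_neg, ← div_eq_mul_inv, div_le_iff₀ (exp_pos _), ← exp_add, add_comm] at h

theorem card_partition_lt {i : ℕ} (hi : i < 10240) :
    Fintype.card (Nat.Partition i) < 2 ^ 384 := by
  have hi' : (i : ℝ) ≤ 10240 := by exact_mod_cast hi.le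
  have hpi : π ^ 2 ≤ 3.1416 ^ 2 := by
    have := pi_lt_d4
    gcongr
  have h : p i < 2 ^ 384 := calc
    p i ≤ exp (i * (1 / 79) + π ^ 2 / 6 / (1 / 79)) := p_le_exp (by norm_num) i
    _ < exp (384 * log 2) := by
      rw [exp_lt_exp]
      have := log_two_gt_d9
      norm_num at hpi ⊢
      linarith
    _ = 2 ^ 384 := by
      rw [← exp_log two_pos, ← exp_nat_mul, log_exp]
      norm_num
  rw [p] at h
  exact_mod_cast h

end CriticalRadius

section ArcBounds

/-- The drop of the Poisson kernel `sinh x / (cosh x - cos y)` of the disc of radius `exp (-x)`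
from angle `0` to angle `y`. -/
noncomputable def poissonDrop (x y : ℝ) : ℝ :=
  sinh x / (cosh x - 1) - sinh x / (cosh x - cos y)

theorem poissonDrop_eq {x : ℝ} (hx : x ≠ 0) (y : ℝ) :
    poissonDrop x y = sinh x / (cosh x - 1) * ((1 - cos y) / (cosh x - cos y)) := by
  have hone := cosh_sub_one_pos hx
  have hcos := cosh_sub_cos_pos hx y
  rw [poissonDrop]
  field_simp
  ring

theorem poissonDrop_nonneg {x : ℝ} (hx : 0 < x) (y : ℝ) : 0 ≤ poissonDrop x y := by
  rw [poissonDrop_eq hx.ne']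
  exact mul_nonneg (div_nonneg (sinh_nonneg_iff.2 hx.le) (cosh_sub_one_pos hx.ne').le)
    (div_nonneg (sub_nonneg.2 (cos_le_one y)) (cosh_sub_cos_pos hx.ne' y).le)

theorem poissonDrop_le {x : ℝ} (hx : 0 < x) (y : ℝ) : poissonDrop x y ≤ 2 * y ^ 2 / x ^ 3 := by
  have hone := cosh_sub_one_pos hx.ne'
  have := sinh_pos_iff.2 hx
  calc poissonDrop x y
      ≤ sinh x / (cosh x - 1) * (y ^ 2 / 2 / (cosh x - 1)) := by
        rw [poissonDrop_eq hx.ne']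
        gcongr
        · linarith [one_sub_sq_div_two_le_cos (x := y)]
        · exact cos_le_one y
    _ = sinh x / (cosh x - 1) ^ 2 * (y ^ 2 / 2) := by field_simp
    _ ≤ 4 / x ^ 3 * (y ^ 2 / 2) := by
        refine mul_le_mul_of_nonneg_right ?_ (by positivity)
        rw [div_le_div_iff₀ (by positivity) (by positivity), mul_comm (sinh x)]
        exact pow_three_mul_sinh_le hx.le
    _ = 2 * y ^ 2 / x ^ 3 := by ring

theorem le_one_sub_cos {y a : ℝ} (ha : 0 ≤ a) (ha' : a ≤ 5 / 39) (hy : cos y ≤ cos a) :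
    499 / 1000 * a ^ 2 ≤ 1 - cos y := by
  have hcos := (abs_le.1 (cos_bound (x := a) (by rw [abs_of_nonneg ha]; linarith))).2
  rw [abs_of_nonneg ha] at hcos
  have ha2 : a ^ 2 ≤ (5 / 39) ^ 2 := by gcongr
  nlinarith [sq_nonneg a]

theorem le_poissonDrop {x y a : ℝ} (hx : 0 < x) (hx' : x ≤ 5 / 39) (ha : 0 ≤ a) (ha' : a ≤ x)
    (hy : cos y ≤ cos a) : 99 / 50 / x * (a ^ 2 / (x ^ 2 + a ^ 2)) ≤ poissonDrop x y := by
  have hcosh : cosh x - 1 ≤ 504 / 1000 * x ^ 2 := by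
    have hx2 : x ^ 2 ≤ (5 / 39) ^ 2 := by gcongr
    nlinarith [sq_nonneg x, cosh_sub_one_le (x := x) (by rw [abs_of_pos hx]; linarith)]
  have hcos := le_one_sub_cos ha (ha'.trans hx') hy
  have hratio : 99 / 100 * (a ^ 2 / (x ^ 2 + a ^ 2)) ≤ (1 - cos y) / (cosh x - cos y) := by
    rw [← mul_div_assoc, div_le_div_iff₀ (by positivity) (cosh_sub_cos_pos hx.ne' y)]
    nlinarith [mul_le_mul_of_nonneg_left hcosh (sq_nonneg a),
      mul_le_mul_of_nonneg_right hcos (sq_nonneg a), mul_le_mul_of_nonneg_right hcos (sq_nonneg x)]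
  have hsinh := two_div_le_sinh_div hx
  calc 99 / 50 / x * (a ^ 2 / (x ^ 2 + a ^ 2))
      = 2 / x * (99 / 100 * (a ^ 2 / (x ^ 2 + a ^ 2))) := by ring
    _ ≤ sinh x / (cosh x - 1) * ((1 - cos y) / (cosh x - cos y)) :=
        mul_le_mul hsinh hratio (by positivity) ((by positivity : 0 ≤ 2 / x).trans hsinh)
    _ = poissonDrop x y := (poissonDrop_eq hx.ne' y).symm

theorem hasSum_genRe_zero_sub {s : ℝ} (hs : 0 < s) (t : ℝ) :
    HasSum (fun m : ℕ => poissonDrop ((m + 1) * s) ((m + 1) * t) / (2 * (m + 1)))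
      (genRe s 0 - genRe s t) := by
  refine ((hasSum_genRe_zero hs).sub (hasSum_genRe hs t)).congr_fun fun m => ?_
  rw [poissonDrop]
  ring

theorem genRe_zero_sub_le {s : ℝ} (hs : 0 < s) (t : ℝ) :
    genRe s 0 - genRe s t ≤ π ^ 2 / 6 / s ^ 3 * t ^ 2 := by
  refine hasSum_le (fun m => ?_) (hasSum_genRe_zero_sub hs t)
    ((hasSum_inv_succ_sq.div_const (s ^ 3)).mul_right (t ^ 2))
  have hdrop := poissonDrop_le (x := (m + 1) * s) (by positivity) ((m + 1) * t)
  calc poissonDrop ((m + 1) * s) ((m + 1) * t) / (2 * (m + 1))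
      ≤ 2 * ((m + 1) * t) ^ 2 / ((m + 1) * s) ^ 3 / (2 * (m + 1)) := by gcongr
    _ = 1 / ((m : ℝ) + 1) ^ 2 / s ^ 3 * t ^ 2 := by field_simp

theorem sum_poissonDrop_le {s : ℝ} (hs : 0 < s) (t : ℝ) (M : ℕ) :
    ∑ m ∈ Finset.range M, poissonDrop ((m + 1) * s) ((m + 1) * t) / (2 * (m + 1)) ≤
      genRe s 0 - genRe s t :=
  sum_le_hasSum _ (fun _ _ => div_nonneg (poissonDrop_nonneg (by positivity) _) (by positivity))
    (hasSum_genRe_zero_sub hs t)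

theorem le_genRe_zero_sub_of_abs_le {s t : ℝ} (hs : 0 < s) (hs' : s ≤ 1 / 78) (ht : |t| ≤ s) :
    153 / 100 / s * (t ^ 2 / (s ^ 2 + t ^ 2)) ≤ genRe s 0 - genRe s t := by
  have hterm (m : ℕ) (hm : m ∈ Finset.range 10) :
      1 / ((m : ℝ) + 1) ^ 2 * (99 / 100 / s * (t ^ 2 / (s ^ 2 + t ^ 2))) ≤
      poissonDrop ((m + 1) * s) ((m + 1) * t) / (2 * (m + 1)) := by
    have hm10 : (m : ℝ) + 1 ≤ 10 := by exact_mod_cast Finset.mem_range.1 hm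
    have hdrop := le_poissonDrop (x := (m + 1) * s) (y := (m + 1) * t) (a := (m + 1) * |t|)
      (by positivity) (by nlinarith) (by positivity) (by gcongr)
      (by rw [← cos_abs ((m + 1) * t), abs_mul, abs_of_pos (show (0 : ℝ) < m + 1 by positivity)])
    calc _ = 99 / 50 / ((m + 1) * s) * (((m + 1) * |t|) ^ 2 /
          (((m + 1) * s) ^ 2 + ((m + 1) * |t|) ^ 2)) / (2 * ((m : ℝ) + 1)) := by
          rw [mul_pow, mul_pow, sq_abs, ← mul_add, mul_div_mul_left _ _ (by positivity)]
          field_simp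
          ring
      _ ≤ _ := by gcongr
  have hsum : (17 / 11 : ℝ) ≤ ∑ m ∈ Finset.range 10, 1 / ((m : ℝ) + 1) ^ 2 := by
    norm_num [Finset.sum_range_succ]
  calc 153 / 100 / s * (t ^ 2 / (s ^ 2 + t ^ 2))
      = 17 / 11 * (99 / 100 / s * (t ^ 2 / (s ^ 2 + t ^ 2))) := by ring
    _ ≤ ∑ m ∈ Finset.range 10,
        1 / ((m : ℝ) + 1) ^ 2 * (99 / 100 / s * (t ^ 2 / (s ^ 2 + t ^ 2))) := by
        rw [← Finset.sum_mul]
        gcongr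
    _ ≤ _ := Finset.sum_le_sum hterm
    _ ≤ _ := sum_poissonDrop_le hs t 10

theorem le_genRe_zero_sub_of_le_abs {s t : ℝ} (hs : 0 < s) (hs' : s ≤ 5 / 39) (ht : s ≤ |t|)
    (ht' : |t| ≤ π) : 49 / 100 / s ≤ genRe s 0 - genRe s t := by
  have hdrop := le_poissonDrop hs hs' hs.le le_rfl
    (by rw [← cos_abs t]; exact cos_le_cos_of_nonneg_of_le_pi hs.le ht' ht)
  have hsum := sum_poissonDrop_le hs t 1
  simp only [Finset.sum_range_one, Nat.cast_zero, zero_add, one_mul, mul_one] at hsum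
  calc 49 / 100 / s
      ≤ 99 / 200 / s := div_le_div_of_nonneg_right (by norm_num) hs.le
    _ = 99 / 50 / s * (s ^ 2 / (s ^ 2 + s ^ 2)) / 2 := by
        field_simp
        norm_num
    _ ≤ poissonDrop s t / 2 := by gcongr
    _ ≤ genRe s 0 - genRe s t := hsum

theorem sq_div_two_le_cosh_sub_cos (x y : ℝ) : x ^ 2 / 2 ≤ cosh x - cos y :=
  (sq_div_two_le_cosh_sub_one x).trans (sub_le_sub_left (cos_le_one y) _)

theorem abs_sin_div_sub_le {x : ℝ} (hx : 0 < x) (y : ℝ) :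
    |sin y / (cosh x - cos y) / 2 - y / x ^ 2| ≤ 2 * |y| / x ^ 2 := by
  have hden := sq_div_two_le_cosh_sub_cos x y
  have hkernel : |sin y / (cosh x - cos y) / 2| ≤ |y| / x ^ 2 := by
    rw [abs_div, abs_div, abs_two, abs_of_pos (cosh_sub_cos_pos hx.ne' y)]
    calc |sin y| / (cosh x - cos y) / 2 ≤ |y| / (x ^ 2 / 2) / 2 := by
          have := abs_sin_le_abs (x := y)
          gcongr
      _ = |y| / x ^ 2 := by field_simp
  calc |sin y / (cosh x - cos y) / 2 - y / x ^ 2|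
      ≤ |sin y / (cosh x - cos y) / 2| + |y / x ^ 2| := abs_sub _ _
    _ ≤ |y| / x ^ 2 + |y| / x ^ 2 := by
        rw [abs_div y, abs_of_pos (show 0 < x ^ 2 by positivity)]
        gcongr
    _ = 2 * |y| / x ^ 2 := by ring

theorem sin_div_le {x y : ℝ} (hx : 0 < x) (hy : 0 ≤ y) :
    sin y / (cosh x - cos y) / 2 ≤ y / x ^ 2 := by
  have hden := sq_div_two_le_cosh_sub_cos x y
  calc sin y / (cosh x - cos y) / 2 ≤ y / (x ^ 2 / 2) / 2 := by
        have := sin_le hy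
        gcongr
    _ = y / x ^ 2 := by field_simp

theorem le_sin_div {x y : ℝ} (hx : 0 < x) (hx' : x ≤ 1) (hy : 0 ≤ y)
    (hyx : y ^ 2 ≤ 12 / 100 * x ^ 2) :
    y / x ^ 2 - (y ^ 3 / x ^ 4 + 79 / 200 * y) ≤ sin y / (cosh x - cos y) / 2 := by
  obtain ⟨w, hw⟩ : ∃ w, w = 3 / 8 * x ^ 2 + y ^ 2 / x ^ 2 := ⟨_, rfl⟩
  have hyx' : y ^ 2 / x ^ 2 ≤ 12 / 100 := by rwa [div_le_iff₀ (by positivity)]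
  have hx2 : x ^ 2 ≤ 1 := by nlinarith
  have hw0 : 0 ≤ w := by rw [hw]; positivity
  have hden : cosh x - cos y ≤ x ^ 2 / 2 * (1 + w) := by
    have hexpand : x ^ 2 / 2 * (1 + w) = x ^ 2 / 2 + 3 / 16 * x ^ 4 + y ^ 2 / 2 := by
      rw [hw]
      field_simp
      ring
    linarith [one_sub_sq_div_two_le_cos (x := y), cosh_sub_one_le (x := x) (by rwa [abs_of_pos hx])]
  have hcubic : 0 ≤ y - y ^ 3 / 6 := by nlinarith
  have hsin : y - y ^ 3 / 6 ≤ sin y := sin_ge_sub_cube hy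
  have hinv : 1 - w ≤ 1 / (1 + w) := by
    rw [le_div_iff₀ (by positivity)]
    nlinarith
  have hsmall : y * (y ^ 2 / x ^ 2) / 6 * (1 - w) ≤ 1 / 50 * y := calc
    y * (y ^ 2 / x ^ 2) / 6 * (1 - w) ≤ y * (12 / 100) / 6 * 1 := by
      gcongr
      · linarith
      · linarith
    _ = 1 / 50 * y := by ring
  calc y / x ^ 2 - (y ^ 3 / x ^ 4 + 79 / 200 * y)
      ≤ y / x ^ 2 - y ^ 3 / x ^ 4 - 3 / 8 * y - y * (y ^ 2 / x ^ 2) / 6 * (1 - w) := by linarith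
    _ = (y - y ^ 3 / 6) / x ^ 2 * (1 - w) := by
        rw [hw]
        field_simp
        ring
    _ ≤ (y - y ^ 3 / 6) / x ^ 2 * (1 / (1 + w)) := by gcongr
    _ = (y - y ^ 3 / 6) / (x ^ 2 / 2 * (1 + w)) / 2 := by field_simp
    _ ≤ sin y / (cosh x - cos y) / 2 := by
        have := cosh_sub_cos_pos hx.ne' y
        gcongr
        exact hcubic.trans hsin

theorem abs_sin_div_sub_le_of_le_one {x y : ℝ} (hx : 0 < x) (hx' : x ≤ 1)
    (hyx : y ^ 2 ≤ 12 / 100 * x ^ 2) :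
    |sin y / (cosh x - cos y) / 2 - y / x ^ 2| ≤ |y| ^ 3 / x ^ 4 + 79 / 200 * |y| := by
  wlog hy : 0 ≤ y generalizing y
  · have h := this (y := -y) (by rwa [neg_sq]) (by linarith)
    rwa [sin_neg, cos_neg, abs_neg, neg_div, neg_div, neg_div, ← neg_sub', abs_neg] at h
  rw [abs_of_nonneg hy, abs_le]
  have hterms : 0 ≤ y ^ 3 / x ^ 4 + 79 / 200 * y := by positivity
  constructor <;> linarith [le_sin_div hx hx' hy hyx, sin_div_le hx hy]

theorem genIm_summand_sub_eq {s : ℝ} (hs : 0 < s) (t : ℝ) (m : ℕ) :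
    sin ((m + 1) * t) / (cosh ((m + 1) * s) - cos ((m + 1) * t)) / (2 * (m + 1)) -
      1 / ((m : ℝ) + 1) ^ 2 / s ^ 2 * t =
    (sin ((m + 1) * t) / (cosh ((m + 1) * s) - cos ((m + 1) * t)) / 2 -
      (m + 1) * t / ((m + 1) * s) ^ 2) / (m + 1) := by
  rw [sub_div, div_div _ (2 : ℝ)]
  congr 1
  field_simp

theorem abs_genIm_summand_sub_le {s : ℝ} (hs : 0 < s) (t : ℝ) (m : ℕ) :
    |sin ((m + 1) * t) / (cosh ((m + 1) * s) - cos ((m + 1) * t)) / (2 * (m + 1)) -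
      1 / ((m : ℝ) + 1) ^ 2 / s ^ 2 * t| ≤ 1 / ((m : ℝ) + 1) ^ 2 / s ^ 2 * (2 * |t|) := by
  have hm : (0 : ℝ) < m + 1 := by positivity
  rw [genIm_summand_sub_eq hs, abs_div, abs_of_pos hm, div_le_iff₀ hm]
  refine (abs_sin_div_sub_le (mul_pos hm hs) _).trans_eq ?_
  rw [abs_mul, abs_of_pos hm]
  field_simp

theorem abs_genIm_summand_sub_le_of_mul_le_one {s t : ℝ} (hs : 0 < s)
    (ht : t ^ 2 ≤ 12 / 100 * s ^ 2) {m : ℕ} (hms : (m + 1) * s ≤ 1) :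
    |sin ((m + 1) * t) / (cosh ((m + 1) * s) - cos ((m + 1) * t)) / (2 * (m + 1)) -
      1 / ((m : ℝ) + 1) ^ 2 / s ^ 2 * t| ≤
    1 / ((m : ℝ) + 1) ^ 2 / s ^ 4 * |t| ^ 3 + 79 / 200 * |t| := by
  have hm : (0 : ℝ) < m + 1 := by positivity
  rw [genIm_summand_sub_eq hs, abs_div, abs_of_pos hm, div_le_iff₀ hm]
  refine (abs_sin_div_sub_le_of_le_one (mul_pos hm hs) hms ?_).trans_eq ?_
  · rw [mul_pow, mul_pow]
    nlinarith [sq_nonneg ((m : ℝ) + 1)]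
  · rw [abs_mul, abs_of_pos hm]
    field_simp

theorem abs_genIm_sub_le_of_mul_le_one {s t : ℝ} (hs : 0 < s) (ht : t ^ 2 ≤ 12 / 100 * s ^ 2)
    {M : ℕ} (hM : M ≠ 0) (hMs : M * s ≤ 1) :
    |genIm s t - π ^ 2 / 6 / s ^ 2 * t| ≤
      π ^ 2 / 6 / s ^ 4 * |t| ^ 3 + (M * (79 / 200) + 2 / (M * s ^ 2)) * |t| := by
  have hbound : HasSum (fun m : ℕ => 1 / ((m : ℝ) + 1) ^ 2 / s ^ 4 * |t| ^ 3 +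
      (1 / ((m : ℝ) + 1) ^ 2 / s ^ 2 * (2 * |t|) + if m ∈ Finset.range M then
        79 / 200 * |t| - 1 / ((m : ℝ) + 1) ^ 2 / s ^ 2 * (2 * |t|) else 0))
      (π ^ 2 / 6 / s ^ 4 * |t| ^ 3 + (π ^ 2 / 6 / s ^ 2 * (2 * |t|) +
        ∑ m ∈ Finset.range M, (79 / 200 * |t| - 1 / ((m : ℝ) + 1) ^ 2 / s ^ 2 * (2 * |t|)))) := by
    refine ((hasSum_inv_succ_sq.div_const _).mul_right _).add
      (((hasSum_inv_succ_sq.div_const _).mul_right _).add ?_)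
    rw [← Finset.sum_congr rfl fun m (hm : m ∈ Finset.range M) => if_pos hm]
    exact hasSum_sum_of_ne_finset_zero fun m hm => if_neg hm
  have htail : π ^ 2 / 6 / s ^ 2 * (2 * |t|) -
      (∑ m ∈ Finset.range M, 1 / ((m : ℝ) + 1) ^ 2) / s ^ 2 * (2 * |t|) ≤
      1 / (M : ℝ) / s ^ 2 * (2 * |t|) := by
    rw [← sub_mul, ← sub_div]
    gcongr
    linarith [zeta_two_le_sum_add hM]
  refine (((hasSum_genIm hs t).sub ((hasSum_inv_succ_sq.div_const _).mul_right t)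
    ).norm_le_of_bounded hbound fun m => ?_).trans ?_
  · rw [norm_eq_abs]
    split_ifs with hm
    · rw [add_sub_cancel]
      refine abs_genIm_summand_sub_le_of_mul_le_one hs ht (le_trans ?_ hMs)
      gcongr
      exact_mod_cast Finset.mem_range.1 hm
    · rw [add_zero]
      exact (abs_genIm_summand_sub_le hs t m).trans (le_add_of_nonneg_left (by positivity))
  · rw [Finset.sum_sub_distrib, Finset.sum_const, Finset.card_range, nsmul_eq_mul,
      ← Finset.sum_mul, ← Finset.sum_div]
    have hsplit : 2 / (M * s ^ 2) * |t| = 1 / (M : ℝ) / s ^ 2 * (2 * |t|) := by ring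
    linarith

theorem abs_genIm_sub_le {s t : ℝ} (hs : 0 < s) (hs' : s ≤ 1 / 78)
    (ht : t ^ 2 ≤ 12 / 100 * s ^ 2) :
    |genIm s t - π ^ 2 / 6 / s ^ 2 * t| ≤ π ^ 2 / 6 / s ^ 4 * |t| ^ 3 + 49 / 20 / s * |t| := by
  obtain ⟨M, hM, hM'⟩ : ∃ M : ℕ, M ≤ 1 / s ∧ 1 / s < M + 1 :=
    ⟨_, Nat.floor_le (by positivity), Nat.lt_floor_add_one _⟩
  have h78 : 78 ≤ 1 / s := (le_div_iff₀ hs).2 (by linarith)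
  have hMs : 77 / 78 * (1 / s) ≤ M := by linarith
  have hM0 : M ≠ 0 := by
    rintro rfl
    norm_num at hMs
    linarith
  refine (abs_genIm_sub_le_of_mul_le_one hs ht hM0 ((le_div_iff₀ hs).1 hM)).trans ?_
  gcongr
  calc M * (79 / 200) + 2 / (M * s ^ 2)
      ≤ 1 / s * (79 / 200) + 2 / (77 / 78 * (1 / s) * s ^ 2) := by gcongr
    _ = (79 / 200 + 156 / 77) / s := by
        field_simp
        ring
    _ ≤ 49 / 20 / s := by gcongr; norm_num

end ArcBounds

section GaussianMoments

theorem integrable_abs_pow_mul_exp_neg_mul_sq {b : ℝ} (hb : 0 < b) (k : ℕ) :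
    MeasureTheory.Integrable fun t : ℝ => |t| ^ k * exp (-(b * t ^ 2)) := by
  have h := (integrable_rpow_mul_exp_neg_mul_sq hb (s := k)
    (neg_one_lt_zero.trans_le k.cast_nonneg)).abs
  simpa only [rpow_natCast, neg_mul, abs_mul, abs_pow, abs_exp] using h

theorem integral_abs_pow_mul_exp_neg_mul_sq {b : ℝ} (hb : 0 < b) (k : ℕ) :
    ∫ t : ℝ, |t| ^ k * exp (-(b * t ^ 2)) =
      b ^ (-((k : ℝ) + 1) / 2) * Gamma (((k : ℝ) + 1) / 2) := by
  have h := integral_comp_abs (f := fun t : ℝ => t ^ k * exp (-(b * t ^ 2)))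
  have hk := integral_rpow_mul_exp_neg_mul_rpow two_pos
    (neg_one_lt_zero.trans_le (k.cast_nonneg (α := ℝ))) hb
  simp only [sq_abs] at h
  simp only [rpow_natCast, rpow_two, neg_mul] at hk
  rw [h, hk]
  ring

theorem integral_abs_mul_exp_neg_mul_sq {b : ℝ} (hb : 0 < b) :
    ∫ t : ℝ, |t| * exp (-(b * t ^ 2)) = 1 / b := by
  have h := integral_abs_pow_mul_exp_neg_mul_sq hb 1
  norm_num [rpow_neg_one] at h
  rw [h, one_div]

open scoped Nat in
theorem integral_pow_mul_exp_neg_mul_sq {b : ℝ} (hb : 0 < b) (m : ℕ) :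
    ∫ t : ℝ, t ^ (2 * m) * exp (-(b * t ^ 2)) =
      (2 * m - 1)‼ / (2 * b) ^ m * √(π / b) := by
  have h := integral_abs_pow_mul_exp_neg_mul_sq hb (2 * m)
  simp only [(even_two_mul m).pow_abs, Nat.cast_mul, Nat.cast_ofNat] at h
  have hexp : (2 * (m : ℝ) + 1) / 2 = m + 1 / 2 := by ring
  rw [h, neg_div, hexp, Gamma_nat_add_half, rpow_neg hb.le, rpow_add hb, rpow_natCast,
    ← sqrt_eq_rpow, sqrt_div pi_pos.le, mul_pow]
  field_simp

theorem integral_le_integral_of_nonneg {f : ℝ → ℝ} (hf : MeasureTheory.Integrable f)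
    (hf₀ : ∀ t, 0 ≤ f t) {a b : ℝ} (hab : a ≤ b) : ∫ t in a..b, f t ≤ ∫ t, f t := by
  rw [intervalIntegral.integral_of_le hab]
  exact MeasureTheory.setIntegral_le_integral hf (Filter.Eventually.of_forall hf₀)

theorem sqrt_pi_div_sub_le_integral_exp_neg_mul_sq {b c L : ℝ} (hc : 0 < c) (hcb : c ≤ b)
    (hL : 0 ≤ L) :
    √(π / b) - exp (-((b - c) * L ^ 2)) * √(π / c) ≤ ∫ t in -L..L, exp (-(b * t ^ 2)) := by
  have hint {a : ℝ} (ha : 0 < a) : MeasureTheory.Integrable fun t : ℝ => exp (-(a * t ^ 2)) := by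
    simpa only [neg_mul] using integrable_exp_neg_mul_sq ha
  have hgauss (a : ℝ) : ∫ t : ℝ, exp (-(a * t ^ 2)) = √(π / a) := by
    simpa only [neg_mul] using integral_gaussian a
  have hb := hint (hc.trans_le hcb)
  have htail : ∫ t in (Set.Ioc (-L) L)ᶜ, exp (-(b * t ^ 2)) ≤
      exp (-((b - c) * L ^ 2)) * √(π / c) := by
    rw [← hgauss c, ← MeasureTheory.integral_const_mul]
    refine (MeasureTheory.setIntegral_mono_on hb.integrableOn
      ((hint hc).const_mul _).integrableOn measurableSet_Ioc.compl fun t ht => ?_).trans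
      (MeasureTheory.setIntegral_le_integral ((hint hc).const_mul _)
        (Filter.Eventually.of_forall fun t => by positivity))
    have hLt : L ^ 2 ≤ t ^ 2 := by
      rw [sq_le_sq, abs_of_nonneg hL, le_abs]
      by_contra! h
      exact ht ⟨by linarith, h.1.le⟩
    rw [← exp_add, exp_le_exp]
    linarith [mul_le_mul_of_nonneg_left hLt (sub_nonneg.2 hcb)]
  have hsplit := MeasureTheory.integral_add_compl (measurableSet_Ioc (a := -L) (b := L)) hb
  rw [hgauss] at hsplit
  rw [intervalIntegral.integral_of_le (by linarith)]
  linarith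

end GaussianMoments

section ArcGaussian

/-- The Gaussian profile on the scale `s ^ (3 / 2)`, which is the width of the peak of the
generating function on the circle of radius `exp (-s)`. -/
noncomputable def arcGaussian (a s t : ℝ) : ℝ := exp (-(a / s ^ 3 * t ^ 2))

theorem arcGaussian_pos (a s t : ℝ) : 0 < arcGaussian a s t := exp_pos _

@[fun_prop]
theorem continuous_arcGaussian (a s : ℝ) : Continuous (arcGaussian a s) := by
  unfold arcGaussian
  fun_prop

theorem sqrt_pi_div_le {a s C : ℝ} (ha : 0 < a) (hs : 0 < s) (hC : 0 ≤ C) (h : 1 ≤ C ^ 2 * a) :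
    √(π / (a / s ^ 3)) ≤ C * √(π * s ^ 3) := by
  rw [← sqrt_sq hC, ← sqrt_mul (sq_nonneg C)]
  apply sqrt_le_sqrt
  rw [div_div_eq_mul_div, div_le_iff₀ ha]
  nlinarith [show 0 < π * s ^ 3 by positivity]

theorem le_sqrt_pi_div {a s C : ℝ} (ha : 0 < a) (hs : 0 < s) (hC : 0 ≤ C) (h : C ^ 2 * a ≤ 1) :
    C * √(π * s ^ 3) ≤ √(π / (a / s ^ 3)) := by
  rw [← sqrt_sq hC, ← sqrt_mul (sq_nonneg C)]
  apply sqrt_le_sqrt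
  rw [div_div_eq_mul_div, le_div_iff₀ ha]
  nlinarith [show 0 < π * s ^ 3 by positivity]

open scoped Nat in
theorem integral_pow_mul_arcGaussian_le {a s C : ℝ} (ha : 0 < a) (hs : 0 < s) (hC : 0 ≤ C)
    (h : 1 ≤ C ^ 2 * a) (m : ℕ) {L : ℝ} (hL : 0 ≤ L) :
    ∫ t in -L..L, t ^ (2 * m) * arcGaussian a s t ≤
      (2 * m - 1)‼ / (2 * a) ^ m * C * (s ^ (3 * m) * √(π * s ^ 3)) := by
  have hb : 0 < a / s ^ 3 := by positivity
  have hint := integrable_abs_pow_mul_exp_neg_mul_sq hb (2 * m)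
  simp only [(even_two_mul m).pow_abs] at hint
  have hnonneg (t : ℝ) : 0 ≤ t ^ (2 * m) * exp (-(a / s ^ 3 * t ^ 2)) := by
    have := (even_two_mul m).pow_nonneg t
    positivity
  calc ∫ t in -L..L, t ^ (2 * m) * arcGaussian a s t
      ≤ (2 * m - 1)‼ / (2 * (a / s ^ 3)) ^ m * √(π / (a / s ^ 3)) := by
        rw [← integral_pow_mul_exp_neg_mul_sq hb]
        exact integral_le_integral_of_nonneg hint hnonneg (by linarith)
    _ ≤ (2 * m - 1)‼ / (2 * (a / s ^ 3)) ^ m * (C * √(π * s ^ 3)) := by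
        gcongr
        exact sqrt_pi_div_le ha hs hC h
    _ = (2 * m - 1)‼ / (2 * a) ^ m * C * (s ^ (3 * m) * √(π * s ^ 3)) := by
        rw [mul_div_assoc', div_pow, pow_mul]
        field_simp

theorem integral_abs_mul_arcGaussian_le {a s : ℝ} (ha : 0 < a) (hs : 0 < s) {L : ℝ}
    (hL : 0 ≤ L) : ∫ t in -L..L, |t| * arcGaussian a s t ≤ 1 / a * s ^ 3 := by
  have hb : 0 < a / s ^ 3 := by positivity
  have hint := integrable_abs_pow_mul_exp_neg_mul_sq hb 1
  simp only [pow_one] at hint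
  calc ∫ t in -L..L, |t| * arcGaussian a s t
      ≤ 1 / (a / s ^ 3) := by
        rw [← integral_abs_mul_exp_neg_mul_sq hb]
        exact integral_le_integral_of_nonneg hint (fun t => by positivity) (by linarith)
    _ = 1 / a * s ^ 3 := by field_simp

theorem exp_neg_minor_arc_le {s : ℝ} (hs : 0 < s) (hs' : s ≤ 1 / 78) :
    exp (-(1229 / 10000 / s)) ≤ 14 / 100000 := by
  have hexp : (100000 / 14 : ℝ) ≤ exp 9 := by
    have := exp_one_gt_d9
    calc (100000 / 14 : ℝ) ≤ 2.7182818283 ^ 9 := by norm_num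
      _ ≤ exp 1 ^ 9 := by gcongr
      _ = exp 9 := by rw [← exp_nat_mul]; norm_num
  calc exp (-(1229 / 10000 / s)) ≤ exp (-9) := by
        gcongr
        rw [le_div_iff₀ hs]
        linarith
    _ ≤ (100000 / 14)⁻¹ := by rw [exp_neg]; gcongr
    _ = 14 / 100000 := by norm_num

theorem exp_neg_far_arc_le {s : ℝ} (hs : 0 < s) (hs' : s ≤ 1 / 78) :
    exp (-(49 / 100 / s)) ≤ 1 / 1000000 * s ^ 5 := by
  have hexp : (1000000 * 78 ^ 5 : ℝ) ≤ exp 38 := by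
    have := exp_one_gt_d9
    calc (1000000 * 78 ^ 5 : ℝ) ≤ 2.7182818283 ^ 38 := by norm_num
      _ ≤ exp 1 ^ 38 := by gcongr
      _ = exp 38 := by rw [← exp_nat_mul]; norm_num
  have hinv : 1 / (78 * s) ≤ exp (1 / (78 * s) - 1) := by
    linarith [add_one_le_exp (1 / (78 * s) - 1)]
  have hsum : 38 + 5 * (1 / (78 * s) - 1) ≤ 49 / 100 / s := by
    field_simp
    linarith
  rw [exp_neg]
  calc (exp (49 / 100 / s))⁻¹ ≤ (1000000 * 78 ^ 5 * (1 / (78 * s)) ^ 5)⁻¹ := by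
        gcongr
        calc 1000000 * 78 ^ 5 * (1 / (78 * s)) ^ 5
            ≤ exp 38 * exp (1 / (78 * s) - 1) ^ 5 := by gcongr
          _ = exp (38 + 5 * (1 / (78 * s) - 1)) := by
              rw [exp_add, ← exp_nat_mul, Nat.cast_ofNat]
          _ ≤ exp (49 / 100 / s) := by gcongr
    _ = 1 / 1000000 * s ^ 5 := by field_simp

end ArcGaussian

section ArcWeight

/-- The modulus of the generating function at `exp (-s + t * I)`, relative to its maximum over the
circle of radius `exp (-s)`. -/
noncomputable def arcWeight (s t : ℝ) : ℝ := exp (genRe s t - genRe s 0)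

/-- A majorant of `arcWeight s` away from its peak, that is, for `t ^ 2 ≥ 12 / 100 * s ^ 2`: the
Gaussian takes care of `|t| ≤ s`, the constant of `s ≤ |t| ≤ π`. -/
noncomputable def minorArcMajorant (s t : ℝ) : ℝ :=
  14 / 100000 * arcGaussian (153 / 800) s t + 1 / 1000000 * s ^ 5

variable {s t : ℝ}

theorem arcWeight_pos (s t : ℝ) : 0 < arcWeight s t := exp_pos _

theorem continuous_arcWeight (hs : 0 < s) : Continuous (arcWeight s) := by
  have := continuous_genRe hs
  unfold arcWeight
  fun_prop

@[fun_prop]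
theorem continuous_minorArcMajorant (s : ℝ) : Continuous (minorArcMajorant s) := by
  unfold minorArcMajorant
  fun_prop

theorem minorArcMajorant_pos (hs : 0 < s) (t : ℝ) : 0 < minorArcMajorant s t := by
  have := arcGaussian_pos (153 / 800) s t
  unfold minorArcMajorant
  positivity

theorem arcGaussian_le_arcWeight (hs : 0 < s) (t : ℝ) :
    arcGaussian (π ^ 2 / 6) s t ≤ arcWeight s t := by
  rw [arcGaussian, arcWeight, exp_le_exp]
  linarith [genRe_zero_sub_le hs t]

theorem arcWeight_le_arcGaussian (hs : 0 < s) (hs' : s ≤ 1 / 78)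
    (ht : t ^ 2 ≤ 12 / 100 * s ^ 2) : arcWeight s t ≤ arcGaussian (153 / 112) s t := by
  have hts : |t| ≤ s := abs_le_of_sq_le_sq (ht.trans (by nlinarith)) hs.le
  rw [arcGaussian, arcWeight, exp_le_exp, le_neg, neg_sub]
  calc 153 / 112 / s ^ 3 * t ^ 2 = 153 / 100 / s * (t ^ 2 / (s ^ 2 + 12 / 100 * s ^ 2)) := by
        field_simp
        ring
    _ ≤ 153 / 100 / s * (t ^ 2 / (s ^ 2 + t ^ 2)) := by gcongr
    _ ≤ genRe s 0 - genRe s t := le_genRe_zero_sub_of_abs_le hs hs' hts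

theorem arcWeight_le_minorArcMajorant_of_abs_le (hs : 0 < s) (hs' : s ≤ 1 / 78)
    (ht : 12 / 100 * s ^ 2 ≤ t ^ 2) (hts : |t| ≤ s) : arcWeight s t ≤ minorArcMajorant s t := by
  have hts2 : t ^ 2 ≤ s ^ 2 := by rwa [sq_le_sq, abs_of_pos hs]
  have hratio : 1229 / 15300 + 1 / 8 * (t ^ 2 / s ^ 2) ≤ t ^ 2 / (s ^ 2 + t ^ 2) := by
    have hhalf : 1 / 2 * (t ^ 2 / s ^ 2) ≤ t ^ 2 / (s ^ 2 + t ^ 2) := by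
      calc 1 / 2 * (t ^ 2 / s ^ 2) = t ^ 2 / (s ^ 2 + s ^ 2) := by field_simp; ring
        _ ≤ t ^ 2 / (s ^ 2 + t ^ 2) := by gcongr
    have hconst : (12 / 112 : ℝ) ≤ t ^ 2 / (s ^ 2 + t ^ 2) := by
      rw [le_div_iff₀ (by positivity)]
      linarith
    linarith
  have hdrop : 1229 / 10000 / s + 153 / 800 / s ^ 3 * t ^ 2 ≤ genRe s 0 - genRe s t := by
    calc 1229 / 10000 / s + 153 / 800 / s ^ 3 * t ^ 2
        = 153 / 100 / s * (1229 / 15300 + 1 / 8 * (t ^ 2 / s ^ 2)) := by field_simp; ring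
      _ ≤ 153 / 100 / s * (t ^ 2 / (s ^ 2 + t ^ 2)) := by gcongr
      _ ≤ genRe s 0 - genRe s t := le_genRe_zero_sub_of_abs_le hs hs' hts
  have := arcGaussian_pos (153 / 800) s t
  calc arcWeight s t
      ≤ exp (-(1229 / 10000 / s)) * arcGaussian (153 / 800) s t := by
        rw [arcWeight, arcGaussian, ← exp_add, exp_le_exp]
        linarith
    _ ≤ 14 / 100000 * arcGaussian (153 / 800) s t := by
        gcongr
        exact exp_neg_minor_arc_le hs hs'
    _ ≤ minorArcMajorant s t := le_add_of_nonneg_right (by positivity)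

theorem arcWeight_le_minorArcMajorant (hs : 0 < s) (hs' : s ≤ 1 / 78)
    (ht : 12 / 100 * s ^ 2 ≤ t ^ 2) (ht' : |t| ≤ π) : arcWeight s t ≤ minorArcMajorant s t := by
  rcases le_total |t| s with hts | hts
  · exact arcWeight_le_minorArcMajorant_of_abs_le hs hs' ht hts
  · have hdrop := le_genRe_zero_sub_of_le_abs hs (by linarith) hts ht'
    have := arcGaussian_pos (153 / 800) s t
    calc arcWeight s t ≤ exp (-(49 / 100 / s)) := by
          rw [arcWeight, exp_le_exp]
          linarith
      _ ≤ 1 / 1000000 * s ^ 5 := exp_neg_far_arc_le hs hs'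
      _ ≤ minorArcMajorant s t := le_add_of_nonneg_left (by positivity)

theorem arcWeight_le (hs : 0 < s) (hs' : s ≤ 1 / 78) (ht : |t| ≤ π) :
    arcWeight s t ≤ arcGaussian (153 / 112) s t + minorArcMajorant s t := by
  rcases le_total (t ^ 2) (12 / 100 * s ^ 2) with h | h
  · exact le_add_of_le_of_nonneg (arcWeight_le_arcGaussian hs hs' h) (minorArcMajorant_pos hs t).le
  · exact le_add_of_nonneg_of_le (arcGaussian_pos _ s t).le
      (arcWeight_le_minorArcMajorant hs hs' h ht)

theorem integral_arcWeight_mul_le (hs : 0 < s) (hs' : s ≤ 1 / 78) {f g : ℝ → ℝ}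
    (hf : Continuous f) (hg : Continuous g) (hf₀ : ∀ t, 0 ≤ f t) (hfg : ∀ t, f t ≤ g t) {B : ℝ}
    (hgB : ∀ t, |t| ≤ π → g t ≤ B) :
    ∫ t in -π..π, arcWeight s t * f t ≤
      (∫ t in -π..π, g t * arcGaussian (153 / 112) s t) +
        14 / 100000 * (∫ t in -π..π, g t * arcGaussian (153 / 800) s t) +
          2 * π * (1 / 1000000 * s ^ 5 * B) := by
  have hweight := continuous_arcWeight hs
  have hint {h : ℝ → ℝ} (hh : Continuous h) :
      IntervalIntegrable h MeasureTheory.volume (-π) π := hh.intervalIntegrable _ _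
  calc ∫ t in -π..π, arcWeight s t * f t
      ≤ ∫ t in -π..π, (g t * arcGaussian (153 / 112) s t +
          14 / 100000 * (g t * arcGaussian (153 / 800) s t) + 1 / 1000000 * s ^ 5 * B) := by
        refine intervalIntegral.integral_mono_on (by linarith [pi_pos])
          (hint (by fun_prop)) (hint (by fun_prop)) fun t ht => ?_
        have hle := arcWeight_le hs hs' (abs_le.2 ht)
        have hpos := (arcWeight_pos s t).le.trans hle
        calc arcWeight s t * f t
            ≤ (arcGaussian (153 / 112) s t + minorArcMajorant s t) * g t :=
              mul_le_mul hle (hfg t) (hf₀ t) hpos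
          _ = g t * arcGaussian (153 / 112) s t +
              14 / 100000 * (g t * arcGaussian (153 / 800) s t) + 1 / 1000000 * s ^ 5 * g t := by
              rw [minorArcMajorant]
              ring
          _ ≤ _ := by
              gcongr
              exact hgB t (abs_le.2 ht)
    _ = _ := by
        rw [intervalIntegral.integral_add (hint (by fun_prop)) (hint (by fun_prop)),
          intervalIntegral.integral_add (hint (by fun_prop)) (hint (by fun_prop)),
          intervalIntegral.integral_const_mul, intervalIntegral.integral_const, smul_eq_mul,
          sub_neg_eq_add, ← two_mul]

theorem integral_arcWeight_mul_abs_sin_le (hs : 0 < s) (hs' : s ≤ 1 / 78) :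
    ∫ t in -π..π, arcWeight s t * |sin t| ≤ 735 / 1000 * s ^ 3 := by
  have h := integral_arcWeight_mul_le hs hs' (f := fun t => |sin t|) (g := fun t => |t|)
    (by fun_prop) (by fun_prop) (fun t => abs_nonneg _) (fun t => abs_sin_le_abs) (fun t ht => ht)
  have hpeak := integral_abs_mul_arcGaussian_le (a := 153 / 112) (by norm_num) hs pi_pos.le
  have hminor := integral_abs_mul_arcGaussian_le (a := 153 / 800) (by norm_num) hs pi_pos.le
  have hfar : 2 * π * (1 / 1000000 * s ^ 5 * π) ≤ 32 / 1000000 * s ^ 3 := by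
    calc 2 * π * (1 / 1000000 * s ^ 5 * π) ≤ 2 * 4 * (1 / 1000000 * s ^ 3 * 4) := by
          gcongr 2 * ?_ * (_ * ?_ * ?_)
          · exact pi_lt_four.le
          · exact pow_le_pow_of_le_one hs.le (by linarith) (by norm_num)
          · exact pi_lt_four.le
      _ = 32 / 1000000 * s ^ 3 := by ring
  have : 0 < s ^ 3 := by positivity
  linarith

theorem sq_le_sqrt_pi_mul (hs : 0 < s) (hs' : s ≤ 1) : s ^ 2 ≤ √(π * s ^ 3) := by
  apply le_sqrt_of_sq_le
  nlinarith [pi_gt_three, pow_pos hs 3]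

theorem integral_arcWeight_mul_one_sub_cos_le (hs : 0 < s) (hs' : s ≤ 1 / 78) :
    ∫ t in -π..π, arcWeight s t * (2 * (1 - cos t)) ≤ 316 / 1000 * (s ^ 3 * √(π * s ^ 3)) := by
  have h := integral_arcWeight_mul_le hs hs' (f := fun t => 2 * (1 - cos t)) (g := fun t => t ^ 2)
    (by fun_prop) (by fun_prop) (fun t => by linarith [cos_le_one t])
    (fun t => by linarith [one_sub_sq_div_two_le_cos (x := t)])
    (fun t ht => sq_le_sq.2 (ht.trans (le_abs_self π)))
  have hpeak := integral_pow_mul_arcGaussian_le (a := 153 / 112) (C := 8557 / 10000) (by norm_num)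
    hs (by norm_num) (by norm_num) 1 pi_pos.le
  have hminor := integral_pow_mul_arcGaussian_le (a := 153 / 800) (C := 2287 / 1000) (by norm_num)
    hs (by norm_num) (by norm_num) 1 pi_pos.le
  norm_num at hpeak hminor
  have hfar : 2 * π * (1 / 1000000 * s ^ 5 * π ^ 2) ≤
      128 / 1000000 * (s ^ 3 * √(π * s ^ 3)) := by
    calc 2 * π * (1 / 1000000 * s ^ 5 * π ^ 2)
        = 2 * π * (1 / 1000000 * (s ^ 3 * s ^ 2) * π ^ 2) := by ring
      _ ≤ 2 * 4 * (1 / 1000000 * (s ^ 3 * √(π * s ^ 3)) * 4 ^ 2) := by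
          gcongr 2 * ?_ * (_ * (_ * ?_) * ?_ ^ 2)
          · exact pi_lt_four.le
          · exact sq_le_sqrt_pi_mul hs (by linarith)
          · exact pi_lt_four.le
      _ = 128 / 1000000 * (s ^ 3 * √(π * s ^ 3)) := by ring
  have : 0 < s ^ 3 * √(π * s ^ 3) := by positivity
  linarith

end ArcWeight

section ArcIntegral

/-- The coefficient integral `∫ t in -π..π, F (exp (-s + t * I)) * exp (-(k * t * I))` of the
generating function `F`, relative to the maximum `F (exp (-s))` of `F` on the circle of
integration. -/
noncomputable def arcIntegral (s k : ℝ) : ℝ :=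
  ∫ t in -π..π, arcWeight s t * cos (genIm s t - k * t)

variable {s : ℝ}

theorem p_eq_exp_mul_arcIntegral (hs : 0 < s) (k : ℕ) :
    p k = exp (k * s + genRe s 0) / (2 * π) * arcIntegral s k := by
  have hint : arcIntegral s k = exp (-genRe s 0) * (2 * π * (p k * exp (-(k * s)))) := by
    rw [← integral_exp_genRe_mul_cos hs k, ← intervalIntegral.integral_const_mul, arcIntegral]
    refine intervalIntegral.integral_congr fun t _ => ?_
    simp only [arcWeight, sub_eq_add_neg, exp_add]
    ring
  have := pi_pos
  rw [hint, exp_add, exp_neg, exp_neg]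
  field_simp

theorem intervalIntegrable_arcIntegral (hs : 0 < s) (k : ℝ) :
    IntervalIntegrable (fun t => arcWeight s t * cos (genIm s t - k * t))
      MeasureTheory.volume (-π) π := by
  have hweight := continuous_arcWeight hs
  have him := continuous_genIm hs
  exact (by fun_prop : Continuous _).intervalIntegrable _ _

theorem genIm_sub_pred_mul (s k t : ℝ) :
    genIm s t - (k - 1) * t = genIm s t - k * t + t := by
  ring

theorem genIm_sub_succ_mul (s k t : ℝ) :
    genIm s t - (k + 1) * t = genIm s t - k * t - t := by
  ring

theorem two_mul_arcIntegral_sub_le (hs : 0 < s) (k : ℝ) :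
    2 * arcIntegral s k - ∫ t in -π..π, arcWeight s t * (2 * (1 - cos t)) ≤
      arcIntegral s (k - 1) + arcIntegral s (k + 1) := by
  have hweight := continuous_arcWeight hs
  have hint := intervalIntegrable_arcIntegral hs
  have hdefect : IntervalIntegrable (fun t => arcWeight s t * (2 * (1 - cos t)))
      MeasureTheory.volume (-π) π := (by fun_prop : Continuous _).intervalIntegrable _ _
  simp only [arcIntegral]
  rw [← intervalIntegral.integral_const_mul,
    ← intervalIntegral.integral_sub ((hint k).const_mul 2) hdefect,
    ← intervalIntegral.integral_add (hint _) (hint _)]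
  refine intervalIntegral.integral_mono_on (by linarith [pi_pos])
    (((hint k).const_mul 2).sub hdefect) ((hint _).add (hint _)) fun t _ => ?_
  rw [genIm_sub_pred_mul, genIm_sub_succ_mul, cos_add (genIm s t - k * t),
    cos_sub (genIm s t - k * t)]
  linarith [mul_nonneg (mul_nonneg (arcWeight_pos s t).le (sub_nonneg.2 (cos_le_one t)))
    (sub_nonneg.2 (cos_le_one (genIm s t - k * t)))]

theorem abs_arcIntegral_sub_le (hs : 0 < s) (k : ℝ) :
    |arcIntegral s (k + 1) - arcIntegral s (k - 1)| ≤
      2 * ∫ t in -π..π, arcWeight s t * |sin t| := by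
  have hweight := continuous_arcWeight hs
  have hint := intervalIntegrable_arcIntegral hs
  have hsin : IntervalIntegrable (fun t => arcWeight s t * |sin t|)
      MeasureTheory.volume (-π) π := (by fun_prop : Continuous _).intervalIntegrable _ _
  have hle : -π ≤ π := by linarith [pi_pos]
  rw [arcIntegral, arcIntegral, ← intervalIntegral.integral_sub (hint _) (hint _),
    ← intervalIntegral.integral_const_mul]
  refine (intervalIntegral.abs_integral_le_integral_abs hle).trans
    (intervalIntegral.integral_mono_on hle ((hint _).sub (hint _)).abs (hsin.const_mul 2)
      fun t _ => ?_)
  have hpos := arcWeight_pos s t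
  calc |arcWeight s t * cos (genIm s t - (k + 1) * t) -
        arcWeight s t * cos (genIm s t - (k - 1) * t)|
      = |2 * arcWeight s t * sin t * sin (genIm s t - k * t)| := by
        rw [genIm_sub_pred_mul, genIm_sub_succ_mul, cos_add (genIm s t - k * t),
          cos_sub (genIm s t - k * t)]
        congr 1
        ring
    _ = 2 * (arcWeight s t * |sin t|) * |sin (genIm s t - k * t)| := by
        rw [abs_mul, abs_mul, abs_of_pos (by positivity), mul_assoc 2]
    _ ≤ 2 * (arcWeight s t * |sin t|) :=
        mul_le_of_le_one_right (by positivity) (abs_sin_le_one _)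

end ArcIntegral

section SaddlePoint

variable {s : ℝ}

theorem pi_sq_div_six_lt : π ^ 2 / 6 < 1.645 := by
  nlinarith [pi_lt_d4, pi_pos]

theorem lt_pi_sq_div_six : 1.6448 < π ^ 2 / 6 := by
  nlinarith [pi_gt_d4]

theorem le_integral_arcGaussian (hs : 0 < s) (hs' : s ≤ 1 / 78) :
    779 / 1000 * √(π * s ^ 3) ≤ ∫ t in -π..π, arcGaussian (π ^ 2 / 6) s t := by
  have hζ := pi_sq_div_six_lt
  have hζ' := lt_pi_sq_div_six
  have h := sqrt_pi_div_sub_le_integral_exp_neg_mul_sq (b := π ^ 2 / 6 / s ^ 3)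
    (c := 153 / 800 / s ^ 3) (by positivity)
    (div_le_div_of_nonneg_right (by linarith) (by positivity)) pi_pos.le
  have htail : exp (-((π ^ 2 / 6 / s ^ 3 - 153 / 800 / s ^ 3) * π ^ 2)) ≤ 14 / 100000 := by
    refine le_trans ?_ (exp_neg_minor_arc_le hs hs')
    rw [← sub_div, div_mul_eq_mul_div]
    exact exp_le_exp.2 (neg_le_neg (div_le_div₀ (mul_nonneg (by linarith) (sq_nonneg π))
      (by nlinarith) (by positivity) (pow_le_of_le_one hs.le (by linarith) three_ne_zero)))
  have hmain : 7796 / 10000 * √(π * s ^ 3) ≤ √(π / (π ^ 2 / 6 / s ^ 3)) :=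
    le_sqrt_pi_div (by positivity) hs (by norm_num) (by linarith)
  have hminor : √(π / (153 / 800 / s ^ 3)) ≤ 2287 / 1000 * √(π * s ^ 3) :=
    sqrt_pi_div_le (by norm_num) hs (by norm_num) (by norm_num)
  have := mul_le_mul htail hminor (sqrt_nonneg _) (by norm_num)
  have := sqrt_nonneg (π * s ^ 3)
  exact le_trans (by linarith) h

theorem integral_minorArcMajorant_le (hs : 0 < s) (hs' : s ≤ 1 / 78) :
    ∫ t in -π..π, minorArcMajorant s t ≤ 4 / 10000 * √(π * s ^ 3) := by
  have hgauss := integral_pow_mul_arcGaussian_le (a := 153 / 800) (C := 2287 / 1000) (by norm_num)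
    hs (by norm_num) (by norm_num) 0 pi_pos.le
  norm_num at hgauss
  have hfar : 2 * π * (1 / 1000000 * s ^ 5) ≤ 8 / 1000000 * √(π * s ^ 3) := by
    calc 2 * π * (1 / 1000000 * s ^ 5) ≤ 2 * 4 * (1 / 1000000 * s ^ 2) := by
          gcongr 2 * ?_ * (_ * ?_)
          · exact pi_lt_four.le
          · exact pow_le_pow_of_le_one hs.le (by linarith) (by norm_num)
      _ ≤ 2 * 4 * (1 / 1000000 * √(π * s ^ 3)) := by
          gcongr
          exact sq_le_sqrt_pi_mul hs (by linarith)
      _ = 8 / 1000000 * √(π * s ^ 3) := by ring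
  simp only [minorArcMajorant]
  rw [intervalIntegral.integral_add (Continuous.intervalIntegrable (by fun_prop) _ _)
    intervalIntegrable_const, intervalIntegral.integral_const_mul, intervalIntegral.integral_const,
    smul_eq_mul, sub_neg_eq_add, ← two_mul]
  have := sqrt_nonneg (π * s ^ 3)
  linarith

/-- A bound for half the square of the deviation of `genIm s t` from its linear part. -/
noncomputable def phaseError (s t : ℝ) : ℝ :=
  (π ^ 2 / 6 / s ^ 4) ^ 2 * t ^ 6 + (49 / 20 / s) ^ 2 * t ^ 2

theorem phaseError_nonneg (s t : ℝ) : 0 ≤ phaseError s t := by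
  unfold phaseError
  positivity

@[fun_prop]
theorem continuous_phaseError (s : ℝ) : Continuous (phaseError s) := by
  unfold phaseError
  fun_prop

theorem sq_genIm_sub_div_two_le (hs : 0 < s) (hs' : s ≤ 1 / 78) {t : ℝ}
    (ht : t ^ 2 ≤ 12 / 100 * s ^ 2) :
    (genIm s t - π ^ 2 / 6 / s ^ 2 * t) ^ 2 / 2 ≤ phaseError s t := by
  have hsq := (sq_abs _).symm.trans_le
    (pow_le_pow_left₀ (abs_nonneg _) (abs_genIm_sub_le hs hs' ht) 2)
  calc (genIm s t - π ^ 2 / 6 / s ^ 2 * t) ^ 2 / 2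
      ≤ (π ^ 2 / 6 / s ^ 4 * |t| ^ 3) ^ 2 + (49 / 20 / s * |t|) ^ 2 := by
        linarith [add_sq_le (a := π ^ 2 / 6 / s ^ 4 * |t| ^ 3) (b := 49 / 20 / s * |t|)]
    _ = phaseError s t := by
        rw [phaseError, mul_pow, mul_pow, sq_abs, ← pow_mul, (by decide : Even (3 * 2)).pow_abs]

theorem le_arcWeight_mul_cos (hs : 0 < s) (hs' : s ≤ 1 / 78) {t : ℝ} (ht : |t| ≤ π) :
    arcGaussian (π ^ 2 / 6) s t - phaseError s t * arcGaussian (153 / 112) s t -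
        2 * minorArcMajorant s t ≤
      arcWeight s t * cos (genIm s t - π ^ 2 / 6 / s ^ 2 * t) := by
  have hlow := arcGaussian_le_arcWeight hs t
  have hweight := arcWeight_pos s t
  have herror := phaseError_nonneg s t
  have hgauss := arcGaussian_pos (153 / 112) s t
  rcases le_total (t ^ 2) (12 / 100 * s ^ 2) with h | h
  · have := minorArcMajorant_pos hs t
    have hloss := mul_le_mul (sq_genIm_sub_div_two_le hs hs' h) (arcWeight_le_arcGaussian hs hs' h)
      hweight.le herror
    have hcos := mul_le_mul_of_nonneg_left
      (one_sub_sq_div_two_le_cos (x := genIm s t - π ^ 2 / 6 / s ^ 2 * t)) hweight.le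
    linarith
  · have := mul_nonneg herror hgauss.le
    have hminor := arcWeight_le_minorArcMajorant hs hs' h ht
    have hcos := mul_le_mul_of_nonneg_left
      (neg_one_le_cos (genIm s t - π ^ 2 / 6 / s ^ 2 * t)) hweight.le
    linarith

theorem integral_phaseError_mul_arcGaussian_le (hs : 0 < s) :
    ∫ t in -π..π, phaseError s t * arcGaussian (153 / 112) s t ≤
      3586 / 1000 * (s * √(π * s ^ 3)) := by
  have hmoment := integral_pow_mul_arcGaussian_le (a := 153 / 112) (C := 8557 / 10000)
    (by norm_num) hs (by norm_num) (by norm_num)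
  have hsix : ∫ t in -π..π, t ^ 6 * arcGaussian (153 / 112) s t ≤
      63 / 100 * (s ^ 9 * √(π * s ^ 3)) := by
    refine (hmoment 3 pi_pos.le).trans ?_
    gcongr ?_ * _
    norm_num [show Nat.doubleFactorial 5 = 15 from rfl]
  have htwo : ∫ t in -π..π, t ^ 2 * arcGaussian (153 / 112) s t ≤
      3133 / 10000 * (s ^ 3 * √(π * s ^ 3)) := by
    refine (hmoment 1 pi_pos.le).trans ?_
    gcongr ?_ * _
    norm_num
  calc ∫ t in -π..π, phaseError s t * arcGaussian (153 / 112) s t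
      = (π ^ 2 / 6 / s ^ 4) ^ 2 * (∫ t in -π..π, t ^ 6 * arcGaussian (153 / 112) s t) +
          (49 / 20 / s) ^ 2 * ∫ t in -π..π, t ^ 2 * arcGaussian (153 / 112) s t := by
        simp only [phaseError, add_mul, mul_assoc]
        rw [intervalIntegral.integral_add (Continuous.intervalIntegrable (by fun_prop) _ _)
          (Continuous.intervalIntegrable (by fun_prop) _ _), intervalIntegral.integral_const_mul,
          intervalIntegral.integral_const_mul]
    _ ≤ (π ^ 2 / 6 / s ^ 4) ^ 2 * (63 / 100 * (s ^ 9 * √(π * s ^ 3))) +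
          (49 / 20 / s) ^ 2 * (3133 / 10000 * (s ^ 3 * √(π * s ^ 3))) := by gcongr
    _ = ((π ^ 2 / 6) ^ 2 * (63 / 100) + (49 / 20) ^ 2 * (3133 / 10000)) *
          (s * √(π * s ^ 3)) := by field_simp
    _ ≤ (1.645 ^ 2 * (63 / 100) + (49 / 20) ^ 2 * (3133 / 10000)) * (s * √(π * s ^ 3)) := by
        gcongr
        exact pi_sq_div_six_lt.le
    _ ≤ 3586 / 1000 * (s * √(π * s ^ 3)) := by
        gcongr ?_ * _
        norm_num

theorem le_arcIntegral (hs : 0 < s) (hs' : s ≤ 1 / 78) :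
    73 / 100 * √(π * s ^ 3) ≤ arcIntegral s (π ^ 2 / 6 / s ^ 2) := by
  have hmain := le_integral_arcGaussian hs hs'
  have hphase := integral_phaseError_mul_arcGaussian_le hs
  have hminor := integral_minorArcMajorant_le hs hs'
  have hsqrt : s * √(π * s ^ 3) ≤ 1 / 78 * √(π * s ^ 3) := by gcongr
  have hint {f : ℝ → ℝ} (hf : Continuous f) :
      IntervalIntegrable f MeasureTheory.volume (-π) π := hf.intervalIntegrable _ _
  calc 73 / 100 * √(π * s ^ 3)
      ≤ (∫ t in -π..π, arcGaussian (π ^ 2 / 6) s t) -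
          (∫ t in -π..π, phaseError s t * arcGaussian (153 / 112) s t) -
            2 * ∫ t in -π..π, minorArcMajorant s t := by
        linarith [sqrt_nonneg (π * s ^ 3)]
    _ = ∫ t in -π..π, (arcGaussian (π ^ 2 / 6) s t -
          phaseError s t * arcGaussian (153 / 112) s t - 2 * minorArcMajorant s t) := by
        rw [intervalIntegral.integral_sub (hint (by fun_prop)) (hint (by fun_prop)),
          intervalIntegral.integral_sub (hint (by fun_prop)) (hint (by fun_prop)),
          intervalIntegral.integral_const_mul]
    _ ≤ arcIntegral s (π ^ 2 / 6 / s ^ 2) :=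
        intervalIntegral.integral_mono_on (by linarith [pi_pos]) (hint (by fun_prop))
          (intervalIntegrable_arcIntegral hs _)
          fun t ht => le_arcWeight_mul_cos hs hs' (abs_le.2 ht)

end SaddlePoint

section ArcIntegralDifferences

variable {s k : ℝ}

theorem integral_arcWeight_mul_one_sub_cos_le_arcIntegral (hs : 0 < s) (hs' : s ≤ 1 / 78)
    (hk : π ^ 2 / 6 / s ^ 2 = k) :
    ∫ t in -π..π, arcWeight s t * (2 * (1 - cos t)) ≤ 433 / 1000 * s ^ 3 * arcIntegral s k := by
  have hcentral := mul_le_mul_of_nonneg_left (le_arcIntegral hs hs')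
    (show 0 ≤ 433 / 1000 * s ^ 3 by positivity)
  rw [hk] at hcentral
  have : 0 ≤ s ^ 3 * √(π * s ^ 3) := by positivity
  linarith [integral_arcWeight_mul_one_sub_cos_le hs hs']

theorem sq_integral_arcWeight_mul_abs_sin_le (hs : 0 < s) (hs' : s ≤ 1 / 78)
    (hk : π ^ 2 / 6 / s ^ 2 = k) :
    (∫ t in -π..π, arcWeight s t * |sin t|) ^ 2 ≤ 323 / 1000 * s ^ 3 * arcIntegral s k ^ 2 := by
  have hcentral := le_arcIntegral hs hs'
  rw [hk] at hcentral
  have hnonneg : 0 ≤ ∫ t in -π..π, arcWeight s t * |sin t| :=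
    intervalIntegral.integral_nonneg (by linarith [pi_pos])
      fun t _ => mul_nonneg (arcWeight_pos s t).le (abs_nonneg _)
  calc (∫ t in -π..π, arcWeight s t * |sin t|) ^ 2
      ≤ (735 / 1000 * s ^ 3) ^ 2 := by gcongr; exact integral_arcWeight_mul_abs_sin_le hs hs'
    _ ≤ (323 / 1000 * s ^ 3) * ((73 / 100) ^ 2 * (3.1415 * s ^ 3)) := by
        linarith [mul_pos (pow_pos hs 3) (pow_pos hs 3)]
    _ ≤ (323 / 1000 * s ^ 3) * ((73 / 100) ^ 2 * (π * s ^ 3)) := by gcongr; exact pi_gt_d4.le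
    _ = (323 / 1000 * s ^ 3) * (73 / 100 * √(π * s ^ 3)) ^ 2 := by
        rw [mul_pow (73 / 100), sq_sqrt (by positivity)]
    _ ≤ 323 / 1000 * s ^ 3 * arcIntegral s k ^ 2 := by gcongr

theorem mul_arcIntegral_le_arcIntegral_pred (hs : 0 < s) (hs' : s ≤ 1 / 78)
    (hk : π ^ 2 / 6 / s ^ 2 = k) :
    (1 - 645 / 10000 * s) * arcIntegral s k ≤ arcIntegral s (k - 1) := by
  have hI : 0 ≤ arcIntegral s k :=
    hk ▸ (show 0 ≤ 73 / 100 * √(π * s ^ 3) by positivity).trans (le_arcIntegral hs hs')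
  have hsin : ∫ t in -π..π, arcWeight s t * |sin t| ≤ 6436 / 100000 * s * arcIntegral s k := by
    refine le_of_sq_le_sq ((sq_integral_arcWeight_mul_abs_sin_le hs hs' hk).trans ?_)
      (by positivity)
    rw [mul_pow]
    gcongr
    nlinarith [mul_le_mul_of_nonneg_left hs' (sq_nonneg s)]
  have hcos := integral_arcWeight_mul_one_sub_cos_le_arcIntegral hs hs' hk
  have hcube : s ^ 3 * arcIntegral s k ≤ (1 / 78) ^ 2 * s * arcIntegral s k := by
    rw [pow_succ]
    gcongr
  have : 0 ≤ s * arcIntegral s k := by positivity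
  linarith [two_mul_arcIntegral_sub_le hs k, (abs_le.1 (abs_arcIntegral_sub_le hs k)).2]

theorem mul_sq_arcIntegral_le_mul (hs : 0 < s) (hs' : s ≤ 1 / 78) (hk : π ^ 2 / 6 / s ^ 2 = k) :
    (1 - 756 / 1000 * s ^ 3) * arcIntegral s k ^ 2 ≤
      arcIntegral s (k - 1) * arcIntegral s (k + 1) := by
  have hsin := sq_integral_arcWeight_mul_abs_sin_le hs hs' hk
  have hcos := integral_arcWeight_mul_one_sub_cos_le_arcIntegral hs hs' hk
  have hI : 0 ≤ arcIntegral s k :=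
    hk ▸ (show 0 ≤ 73 / 100 * √(π * s ^ 3) by positivity).trans (le_arcIntegral hs hs')
  have hdiff : (arcIntegral s (k + 1) - arcIntegral s (k - 1)) ^ 2 ≤
      (2 * ∫ t in -π..π, arcWeight s t * |sin t|) ^ 2 :=
    sq_le_sq.2 ((abs_arcIntegral_sub_le hs k).trans (le_abs_self _))
  have hsum : (2 * arcIntegral s k - 433 / 1000 * s ^ 3 * arcIntegral s k) ^ 2 ≤
      (arcIntegral s (k - 1) + arcIntegral s (k + 1)) ^ 2 := by
    have hcube : s ^ 3 ≤ 1 := pow_le_one₀ hs.le (by linarith)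
    refine pow_le_pow_left₀ ?_ (by linarith [two_mul_arcIntegral_sub_le hs k]) 2
    rw [← sub_mul]
    exact mul_nonneg (by linarith) hI
  linarith [sq_nonneg (433 / 1000 * s ^ 3 * arcIntegral s k)]

end ArcIntegralDifferences

section Asymptotics

theorem log_sub_log_le {x y e : ℝ} (hx : 0 < x) (he : e < 1) (h : (1 - e) * x ≤ y) :
    log x - log y ≤ e / (1 - e) := by
  have he' : 0 < 1 - e := sub_pos.2 he
  have hlog := log_le_log (mul_pos he' hx) h
  rw [log_mul he'.ne' hx.ne'] at hlog
  calc log x - log y ≤ -log (1 - e) := by linarith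
    _ ≤ (1 - e)⁻¹ - 1 := by linarith [one_sub_inv_le_log_of_pos he']
    _ = e / (1 - e) := by field_simp; ring

variable {s : ℝ}

theorem arcIntegral_pos (hs : 0 < s) (k : ℕ) : 0 < arcIntegral s k := by
  have h := p_pos k
  rw [p_eq_exp_mul_arcIntegral hs k] at h
  exact pos_of_mul_pos_right h (by positivity)

theorem log_q_eq (hs : 0 < s) {k : ℕ} (hk : k ≠ 0) :
    log (q k) = k * s + genRe s 0 - log (2 * π) + log (arcIntegral s k) - log k := by
  have := arcIntegral_pos hs k
  rw [q, p_eq_exp_mul_arcIntegral hs k, log_div (by positivity) (by positivity),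
    log_mul (by positivity) (by positivity), log_div (by positivity) (by positivity), log_exp]

theorem log_q_succ_sub_le_of_saddle (hs : 0 < s) (hs' : s ≤ 1 / 78) {k : ℕ} (hk : k ≠ 0)
    (hsk : π ^ 2 / 6 / s ^ 2 = k + 1) :
    log (q (k + 1)) - log (q k) ≤ 106456 / 100000 * s - 1 / (k + 1) := by
  have hratio := mul_arcIntegral_le_arcIntegral_pred hs hs' hsk
  have hpos := arcIntegral_pos hs (k + 1)
  rw [add_sub_cancel_right] at hratio
  rw [log_q_eq hs hk, log_q_eq hs k.succ_ne_zero]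
  push_cast at hpos ⊢
  have harc := log_sub_log_le hpos (by linarith) hratio
  have hlin : 645 / 10000 * s / (1 - 645 / 10000 * s) ≤ 6456 / 100000 * s := by
    rw [div_le_iff₀ (by linarith)]
    nlinarith
  have hindex : 1 / ((k : ℝ) + 1) ≤ log (k + 1) - log k := by
    have hk' : (0 : ℝ) < k := by positivity
    rw [← log_div (by positivity) hk'.ne']
    refine le_trans (le_of_eq ?_) (one_sub_inv_le_log_of_pos (by positivity))
    field_simp
    ring
  linarith

theorem two_mul_log_q_succ_sub_le_of_saddle (hs : 0 < s) (hs' : s ≤ 1 / 78) {k : ℕ} (hk : k ≠ 0)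
    (hsk : π ^ 2 / 6 / s ^ 2 = k + 1) :
    2 * log (q (k + 1)) - log (q k) - log (q (k + 2)) ≤ 7561 / 10000 * s ^ 3 := by
  have hratio := mul_sq_arcIntegral_le_mul hs hs' hsk
  have hprev := arcIntegral_pos hs k
  have hpos := arcIntegral_pos hs (k + 1)
  have hnext := arcIntegral_pos hs (k + 2)
  rw [add_sub_cancel_right, add_assoc, one_add_one_eq_two] at hratio
  rw [log_q_eq hs hk, log_q_eq hs k.succ_ne_zero, log_q_eq hs (k := k + 2) (by omega)]
  push_cast at hpos hnext ⊢
  have hcube : s ^ 3 ≤ (1 / 78) ^ 3 := by gcongr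
  have harc := log_sub_log_le (pow_pos hpos 2) (by linarith) hratio
  rw [log_pow, log_mul hprev.ne' hnext.ne'] at harc
  have hcubic : 756 / 1000 * s ^ 3 / (1 - 756 / 1000 * s ^ 3) ≤ 7561 / 10000 * s ^ 3 := by
    rw [div_le_iff₀ (by linarith)]
    nlinarith [pow_pos hs 3]
  have hindex : log k + log (k + 2) ≤ 2 * log ((k : ℝ) + 1) := by
    have hk' : (0 : ℝ) < k := by positivity
    rw [← log_mul hk'.ne' (by positivity), ← Nat.cast_ofNat, ← log_pow]
    gcongr
    push_cast
    linarith
  push_cast at harc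
  linarith

theorem le_genRe_zero_of_le (hs : 0 < s) (hs' : s ≤ 1 / 2) :
    π ^ 2 / 6 / s - 1 - log 2 - 1 / 2 * log (1 / s) ≤ genRe s 0 := by
  have htwo : 2 ≤ 1 / s := by
    rw [le_div_iff₀ hs]
    linarith
  set M := ⌈2 * (1 / s)⌉₊
  have hM : 2 * (1 / s) ≤ M := Nat.le_ceil _
  have hM' : (M : ℝ) < 2 * (1 / s) + 1 := Nat.ceil_lt_add_one (by positivity)
  have hM₀ : (0 : ℝ) < M := by linarith
  have hlog : log M ≤ 2 * log 2 + log (1 / s) := by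
    calc log M ≤ log (2 ^ 2 * (1 / s)) := log_le_log hM₀ (by linarith)
      _ = 2 * log 2 + log (1 / s) := by
        rw [log_mul (by norm_num) (by positivity), log_pow, Nat.cast_ofNat]
  have htrunc : 1 / (M : ℝ) / s ≤ 1 / 2 := by
    calc 1 / (M : ℝ) / s ≤ 1 / (2 * (1 / s)) / s := by gcongr
      _ = 1 / 2 := by field_simp
  have h := le_genRe_zero hs (Nat.cast_pos.1 hM₀).ne'
  rw [sub_div] at h
  linarith

theorem log_inv_add_lt (hs : 0 < s) (hs' : s ≤ 1 / 78) :
    6 * log 2 + 9 / 2 * log (1 / s) + 11294 / 10000 / s < π ^ 2 / 6 / s := by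
  have hinv : 78 ≤ 1 / s := by
    rw [le_div_iff₀ hs]
    linarith
  have hlog : log (1 / s) ≤ 1 / s / 2 ^ 7 - 1 + 7 * log 2 := by
    have h := log_le_sub_one_of_pos (show 0 < 1 / s / 2 ^ 7 by positivity)
    rw [log_div (by positivity) (by norm_num), log_pow] at h
    push_cast at h
    linarith
  calc 6 * log 2 + 9 / 2 * log (1 / s) + 11294 / 10000 / s
      ≤ 37.5 * log 2 - 4.5 + (9 / 2 / 2 ^ 7 + 11294 / 10000) * (1 / s) := by
        rw [div_eq_mul_one_div (11294 / 10000)]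
        linarith
    _ < 1.6448 * (1 / s) := by linarith [log_two_lt_d9]
    _ < π ^ 2 / 6 * (1 / s) := by gcongr; exact lt_pi_sq_div_six
    _ = π ^ 2 / 6 / s := mul_one_div _ _

theorem lt_log_q_of_saddle (hs : 0 < s) (hs' : s ≤ 1 / 78) {n : ℕ} (hn : n ≠ 0)
    (hsn : π ^ 2 / 6 / s ^ 2 = n) : n * s + 11294 / 10000 / s - 1 < log (q n) := by
  have hn' : (0 : ℝ) < n := by positivity
  have hI : 73 / 100 * s ^ 2 ≤ arcIntegral s n := by
    rw [← hsn]
    exact le_trans (by gcongr; exact sq_le_sqrt_pi_mul hs (by linarith)) (le_arcIntegral hs hs')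
  have hprefactor : log (2 * π) + log n - log (arcIntegral s n) ≤ 5 * log 2 + 4 * log (1 / s) := by
    have hpos := arcIntegral_pos hs n
    have hζ := pi_sq_div_six_lt
    rw [← log_mul (by positivity) hn'.ne', ← log_div (by positivity) hpos.ne']
    calc log (2 * π * n / arcIntegral s n) ≤ log (2 ^ 5 * (1 / s) ^ 4) := by
          apply log_le_log (by positivity)
          calc 2 * π * n / arcIntegral s n ≤ 2 * 3.1416 * n / (73 / 100 * s ^ 2) := by
                gcongr
                exact pi_lt_d4.le
            _ = 2 * 3.1416 * (π ^ 2 / 6) / (73 / 100) * (1 / s) ^ 4 := by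
                rw [← hsn]
                field_simp
            _ ≤ 2 ^ 5 * (1 / s) ^ 4 := by
                gcongr ?_ * _
                linarith
      _ = 5 * log 2 + 4 * log (1 / s) := by
          rw [log_mul (by positivity) (by positivity), log_pow, log_pow]
          push_cast
          rfl
  rw [log_q_eq hs hn]
  linarith [le_genRe_zero_of_le hs (by linarith), log_inv_add_lt hs hs']

theorem exists_saddle {n : ℕ} (hn : 10048 ≤ n) :
    ∃ s : ℝ, 0 < s ∧ s ≤ 1 / 78 ∧ π ^ 2 / 6 / s ^ 2 = n := by
  have hn' : (10048 : ℝ) ≤ n := Nat.ofNat_le_cast.2 hn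
  have hs : (0 : ℝ) < π ^ 2 / 6 / n := by positivity
  refine ⟨√(π ^ 2 / 6 / n), by positivity, sqrt_le_iff.2 ⟨by norm_num, ?_⟩, ?_⟩
  · rw [div_le_iff₀ (by positivity)]
    linarith [pi_sq_div_six_lt]
  · rw [sq_sqrt hs.le]
    field_simp

theorem sq_r_lt_of_le {k : ℕ} (hk : 10047 ≤ k) : r (k + 1) ^ 2 < r k * r (k + 2) := by
  have hk₀ : k ≠ 0 := by omega
  obtain ⟨s, hs, hs', hsk⟩ := exists_saddle (n := k + 1) (by omega)
  have hvalue := lt_log_q_of_saddle hs hs' k.succ_ne_zero hsk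
  push_cast at hsk hvalue
  have hζ := pi_sq_div_six_lt
  refine sq_r_lt_of_log_q_lt hk₀ ?_
  have hfirst : 2 * (k + 1) * (log (q (k + 1)) - log (q k)) ≤
      2 * ((k + 1) * s) + 2 * (1063 / 10000 / s) - 2 := by
    calc 2 * (k + 1) * (log (q (k + 1)) - log (q k))
        ≤ 2 * (k + 1) * (106456 / 100000 * s - 1 / (k + 1)) := by
          gcongr ?_ * ?_
          exact log_q_succ_sub_le_of_saddle hs hs' hk₀ hsk
      _ = 2 * ((k + 1) * s) + 2 * (π ^ 2 / 6 * (6456 / 100000) / s) - 2 := by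
          have hks : ((k : ℝ) + 1) * s = π ^ 2 / 6 / s := by
            rw [← hsk]
            field_simp
          field_simp at hks ⊢
          linarith
      _ ≤ 2 * ((k + 1) * s) + 2 * (1063 / 10000 / s) - 2 := by
          gcongr
          linarith
  have hsecond : k * (k + 1) * (2 * log (q (k + 1)) - log (q k) - log (q (k + 2))) ≤
      2 * (10231 / 10000 / s) := by
    calc k * (k + 1) * (2 * log (q (k + 1)) - log (q k) - log (q (k + 2)))
        ≤ k * (k + 1) * (7561 / 10000 * s ^ 3) := by
          gcongr ?_ * ?_
          exact two_mul_log_q_succ_sub_le_of_saddle hs hs' hk₀ hsk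
      _ ≤ (k + 1) * (k + 1) * (7561 / 10000 * s ^ 3) := by
          gcongr
          linarith
      _ = (π ^ 2 / 6) ^ 2 * (7561 / 10000) / s := by
          rw [← hsk]
          field_simp
      _ ≤ 1.645 ^ 2 * (7561 / 10000) / s := by gcongr
      _ ≤ 2 * (10231 / 10000) / s := div_le_div_of_nonneg_right (by norm_num) hs.le
      _ = 2 * (10231 / 10000 / s) := by ring
  have hsum : 1063 / 10000 / s + 10231 / 10000 / s = 11294 / 10000 / s := by ring
  linarith

end Asymptotics

theorem r_strictly_log_convex (n : ℕ) (hn : 61 ≤ n) :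
    r n ^ 2 < r (n - 1) * r (n + 1) := by
  obtain ⟨k, rfl⟩ : ∃ k, n = k + 1 := Nat.exists_eq_add_of_le' (by omega)
  rw [Nat.add_sub_cancel]
  rcases lt_or_ge k 10048 with h | h
  · exact sq_r_lt_of_lt (fun i hi => card_partition_lt hi) (by omega) h
  · exact sq_r_lt_of_le (by omega)
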